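/- arXiv:2105.00018 — 3 statements merged into one kernel-verified Lean document; each statement's English description precedes it below -/
import Mathlib

section
/- There exist C > 0 and k₀ > 0 such that for every k ≥ k₀ and every G ∈ L¹(ℝ; ℝ), the series ∑_{n=0}^∞ ‖T₀ⁿ G‖₁ is bounded above by k² (log k)^C ‖G‖₁. -/
open MeasureTheory ProbabilityTheory Real Filter Set
open scoped ENNReal

noncomputable def hkfun (k x : ℝ) : ℝ :=
  Real.log ((Real.exp (-k) + Real.exp x) / (1 + Real.exp (x - k)))

noncomputable def T0 (ζ : ℝ → ℝ) (k : ℝ) (G : ℝ → ℝ) : ℝ → ℝ :=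
  fun x => ∫ y, G y * deriv (hkfun k) y * ζ (x - hkfun k y)


lemma aux_h_eq (k y : ℝ) : hkfun k y =
    y + Real.log (1 + Real.exp (-k - y)) - Real.log (1 + Real.exp (y - k)) := by
  unfold hkfun
  have h1 : Real.exp (-k) + Real.exp y = Real.exp y * (1 + Real.exp (-k - y)) := by
    rw [mul_add, ← Real.exp_add]; ring_nf
  rw [Real.log_div (by positivity) (by positivity), h1,
    Real.log_mul (by positivity) (by positivity), Real.log_exp]

lemma aux_deriv (k y : ℝ) : deriv (hkfun k) y =
    1 - Real.exp (-k - y) / (1 + Real.exp (-k - y))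
      - Real.exp (y - k) / (1 + Real.exp (y - k)) := by
  have e : hkfun k = fun y =>
    y + Real.log (1 + Real.exp (-k - y)) - Real.log (1 + Real.exp (y - k)) := by
    funext y; exact aux_h_eq k y
  rw [e]
  have h1 : HasDerivAt (fun y : ℝ => 1 + Real.exp (-k - y)) (Real.exp (-k - y) * (-1)) y :=
    (((hasDerivAt_id y).const_sub (-k)).exp).const_add 1
  have h2 : HasDerivAt (fun y : ℝ => 1 + Real.exp (y - k)) (Real.exp (y - k) * 1) y :=
    (((hasDerivAt_id y).sub_const k).exp).const_add 1
  have h3 := ((hasDerivAt_id y).add (h1.log (by positivity))).sub (h2.log (by positivity))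
  refine (h3.congr_deriv ?_).deriv
  ring

lemma aux_meas_h (k : ℝ) : Measurable (hkfun k) := by
  unfold hkfun; fun_prop

lemma aux_habs (k y : ℝ) (hk : 0 ≤ k) : |hkfun k y| ≤ k := by
  have hpos : 0 < (Real.exp (-k) + Real.exp y) / (1 + Real.exp (y - k)) := by positivity
  unfold hkfun
  rw [abs_le]
  constructor
  · rw [Real.le_log_iff_exp_le hpos, le_div_iff₀ (by positivity), mul_add, ← Real.exp_add]
    have : Real.exp (-k + (y - k)) ≤ Real.exp y := Real.exp_le_exp.2 (by linarith)
    linarith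
  · rw [Real.log_le_iff_le_exp hpos, div_le_iff₀ (by positivity), mul_add, ← Real.exp_add]
    have : Real.exp (-k) ≤ Real.exp k := Real.exp_le_exp.2 (by linarith)
    have : k + (y - k) = y := by ring
    rw [this]; linarith

lemma aux_deriv_nonneg (k y : ℝ) (hk : 0 ≤ k) : 0 ≤ deriv (hkfun k) y := by
  rw [aux_deriv]
  have huv : Real.exp (-k - y) * Real.exp (y - k) ≤ 1 := by
    rw [← Real.exp_add, Real.exp_le_one_iff]; linarith
  have hu := Real.exp_pos (-k - y)
  have hv := Real.exp_pos (y - k)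
  generalize Real.exp (-k - y) = u at *
  generalize Real.exp (y - k) = v at *
  have : 1 - u / (1 + u) - v / (1 + v) = (1 - u * v) / ((1 + u) * (1 + v)) := by
    field_simp; ring
  rw [this]
  exact div_nonneg (by linarith) (by positivity)

lemma aux_deriv_half (k y : ℝ) (hy : k < |y|) : deriv (hkfun k) y ≤ 1 / 2 := by
  rw [aux_deriv]
  have hu := Real.exp_pos (-k - y)
  have hv := Real.exp_pos (y - k)
  have huv : 1 ≤ Real.exp (-k - y) ∨ 1 ≤ Real.exp (y - k) := by
    rcases lt_abs.1 hy with h | h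
    · right; apply Real.one_le_exp; linarith
    · left; apply Real.one_le_exp; linarith
  generalize Real.exp (-k - y) = u at *
  generalize Real.exp (y - k) = v at *
  have hu0 : 0 ≤ u / (1 + u) := by positivity
  have hv0 : 0 ≤ v / (1 + v) := by positivity
  rcases huv with h | h
  · have : 1 / 2 ≤ u / (1 + u) := by rw [div_le_div_iff₀ (by norm_num) (by linarith)]; linarith
    linarith
  · have : 1 / 2 ≤ v / (1 + v) := by rw [div_le_div_iff₀ (by norm_num) (by linarith)]; linarith
    linarith

lemma aux_disp (k y : ℝ) (hy : |y| ≤ k) : |y - hkfun k y| ≤ 2 * (1 - deriv (hkfun k) y) := by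
  rw [aux_deriv, aux_h_eq]
  have hu := Real.exp_pos (-k - y)
  have hv := Real.exp_pos (y - k)
  obtain ⟨h1, h2⟩ := abs_le.1 hy
  have hu1 : Real.exp (-k - y) ≤ 1 := by rw [Real.exp_le_one_iff]; linarith
  have hv1 : Real.exp (y - k) ≤ 1 := by rw [Real.exp_le_one_iff]; linarith
  generalize Real.exp (-k - y) = u at *
  generalize Real.exp (y - k) = v at *
  have key : ∀ w : ℝ, 0 < w → w ≤ 1 → 0 ≤ Real.log (1 + w) ∧ Real.log (1 + w) ≤ 2 * (w / (1 + w)) := by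
    intro w hw hw1
    refine ⟨Real.log_nonneg (by linarith), ?_⟩
    have h3 := Real.log_le_sub_one_of_pos (show 0 < 1 + w by linarith)
    have h4 : w ≤ 2 * (w / (1 + w)) := by
      rw [← mul_div_assoc, le_div_iff₀ (by linarith)]; nlinarith
    linarith
  obtain ⟨a1, a2⟩ := key u hu hu1
  obtain ⟨b1, b2⟩ := key v hv hv1
  rw [abs_le]; constructor <;> linarith

lemma aux_second_moment (ζ : ℝ → ℝ) (hζmeas : Measurable ζ) (hζnn : ∀ x, 0 ≤ ζ x)
    (hint : Integrable ζ) (δ : ℝ) (hδ : 0 < δ) (Cδ : ℝ)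
    (htail : ∀ x : ℝ, 0 ≤ x → ∫ y in {y : ℝ | x < |y|}, ζ y ≤ Cδ * Real.exp (-δ * x)) :
    Integrable (fun x => x ^ 2 * ζ x) := by
  refine ⟨by fun_prop, ?_⟩
  rw [hasFiniteIntegral_iff_ofReal (ae_of_all _ fun x => mul_nonneg (sq_nonneg x) (hζnn x))]
  have hms : ∀ n : ℕ, MeasurableSet {y : ℝ | (n : ℝ) < |y|} := fun n =>
    measurableSet_lt measurable_const (by fun_prop)
  have hpt : ∀ x : ℝ, ENNReal.ofReal (x ^ 2 * ζ x) ≤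
      ∑' n : ℕ, ({y : ℝ | (n : ℝ) < |y|}).indicator
        (fun x => ENNReal.ofReal (2 * n + 1) * ENNReal.ofReal (ζ x)) x := by
    intro x
    refine le_trans ?_ (ENNReal.sum_le_tsum (Finset.range ⌈|x|⌉₊))
    have : ∀ n ∈ Finset.range ⌈|x|⌉₊, ({y : ℝ | (n : ℝ) < |y|}).indicator
        (fun x => ENNReal.ofReal (2 * n + 1) * ENNReal.ofReal (ζ x)) x
        = ENNReal.ofReal ((2 * n + 1) * ζ x) := by
      intro n hn
      rw [Set.indicator_of_mem (by simpa [Nat.lt_ceil] using hn), ENNReal.ofReal_mul (by positivity)]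
    rw [Finset.sum_congr rfl this, ← ENNReal.ofReal_sum_of_nonneg
      (fun n _ => mul_nonneg (by positivity) (hζnn x)), ← Finset.sum_mul]
    apply ENNReal.ofReal_le_ofReal
    apply mul_le_mul_of_nonneg_right _ (hζnn x)
    have hs : ∀ N : ℕ, ∑ n ∈ Finset.range N, (2 * (n : ℝ) + 1) = (N : ℝ) ^ 2 := by
      intro N
      induction N with
      | zero => simp
      | succ N ih => rw [Finset.sum_range_succ, ih]; push_cast; ring
    rw [hs, ← sq_abs]
    exact pow_le_pow_left₀ (abs_nonneg x) (Nat.le_ceil _) 2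
  refine lt_of_le_of_lt (lintegral_mono hpt) ?_
  rw [lintegral_tsum (fun n => by
    apply Measurable.aemeasurable
    apply Measurable.indicator _ (hms n)
    fun_prop)]
  have hb : ∀ n : ℕ, ∫⁻ x, ({y : ℝ | (n : ℝ) < |y|}).indicator
        (fun x => ENNReal.ofReal (2 * n + 1) * ENNReal.ofReal (ζ x)) x ≤
        ENNReal.ofReal ((2 * n + 1) * (Cδ * Real.exp (-δ * n))) := by
    intro n
    rw [lintegral_indicator (hms n), lintegral_const_mul _ (by fun_prop),
      ← ofReal_integral_eq_lintegral_ofReal hint.integrableOn (ae_of_all _ hζnn),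
      ← ENNReal.ofReal_mul (by positivity)]
    exact ENNReal.ofReal_le_ofReal (mul_le_mul_of_nonneg_left (htail n (by positivity)) (by positivity))
  refine lt_of_le_of_lt (ENNReal.tsum_le_tsum hb) ?_
  have hr : ‖Real.exp (-δ)‖ < 1 := by
    rw [Real.norm_eq_abs, abs_of_pos (Real.exp_pos _), Real.exp_lt_one_iff]; linarith
  have s1 := summable_pow_mul_geometric_of_norm_lt_one 1 hr
  have s0 := summable_geometric_of_norm_lt_one hr
  have hsum : Summable (fun n : ℕ => (2 * (n : ℝ) + 1) * (Cδ * Real.exp (-δ * n))) := by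
    have := ((s1.mul_left 2).add s0).mul_left Cδ
    refine this.congr fun n => ?_
    rw [show -δ * (n : ℝ) = n * (-δ) by ring, Real.exp_nat_mul]
    ring
  exact hsum.tsum_ofReal_lt_top

lemma aux_tail (ζ : ℝ → ℝ) (h2 : Integrable (fun x => x ^ 2 * ζ x)) (hζmeas : Measurable ζ)
    (ε : ℝ) (hε : 0 < ε) :
    ∀ᶠ k : ℝ in atTop, ∫ x, {y : ℝ | k < |y|}.indicator (fun x => x ^ 2 * ζ x) x < ε := by
  have ht : Tendsto (fun k : ℝ => ∫ x, {y : ℝ | k < |y|}.indicator (fun x => x ^ 2 * ζ x) x)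
      atTop (nhds (∫ _ : ℝ, (0 : ℝ))) := by
    apply tendsto_integral_filter_of_dominated_convergence (fun x => ‖x ^ 2 * ζ x‖)
    · refine Eventually.of_forall fun k => ?_
      exact h2.aestronglyMeasurable.indicator (measurableSet_lt measurable_const (by fun_prop))
    · refine Eventually.of_forall fun k => ae_of_all _ fun x => ?_
      exact norm_indicator_le_norm_self _ _
    · exact h2.norm
    · refine ae_of_all _ fun x => ?_
      refine tendsto_const_nhds.congr' ?_
      filter_upwards [eventually_ge_atTop |x|] with k hk
      rw [Set.indicator_of_notMem (by simpa using hk)]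
  rw [integral_zero] at ht
  exact ht.eventually_lt_const hε

lemma aux_drift (ζ : ℝ → ℝ) (hζnn : ∀ x, 0 ≤ ζ x)
    (hint : Integrable ζ) (hζprob : ∫ x, ζ x = 1)
    (hmean : ∫ x, x * ζ x = 0) (h2 : Integrable (fun x => x ^ 2 * ζ x))
    (h1 : Integrable (fun x => x * ζ x)) (s : ℝ) (hs : ∫ x, x ^ 2 * ζ x = s) (hs0 : 0 < s)
    (k : ℝ) (hk1 : 1 ≤ k) (hks : s ≤ k ^ 2)
    (htl : ∫ x, {y : ℝ | k < |y|}.indicator (fun x => x ^ 2 * ζ x) x < s / 8)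
    (V : ℝ → ℝ) (hV : V = fun x => 2 / s * (9 * k ^ 2 - min (x ^ 2) (4 * k ^ 2))) (y : ℝ) :
    deriv (hkfun k) y * (∫ x, ζ x * V (hkfun k y + x)) + 1 ≤ V y := by
  have hd0 := aux_deriv_nonneg k y (by linarith)
  have hh := aux_habs k y (by linarith)
  have hhy := aux_disp k y
  have hhalf := aux_deriv_half k y
  have hVm : Measurable V := by rw [hV]; fun_prop
  have hVle : ∀ x, V x ≤ 18 / s * k ^ 2 := by
    intro x; rw [hV]; simp only
    have : 0 ≤ min (x ^ 2) (4 * k ^ 2) := by positivity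
    have : 2 / s * (9 * k ^ 2 - min (x ^ 2) (4 * k ^ 2)) ≤ 2 / s * (9 * k ^ 2) := by
      gcongr; linarith
    refine this.trans (le_of_eq (by ring))
  have hVge : ∀ x, 10 / s * k ^ 2 ≤ V x := by
    intro x; rw [hV]; simp only
    have : min (x ^ 2) (4 * k ^ 2) ≤ 4 * k ^ 2 := min_le_right _ _
    have : 2 / s * (5 * k ^ 2) ≤ 2 / s * (9 * k ^ 2 - min (x ^ 2) (4 * k ^ 2)) := by
      gcongr; linarith
    refine le_trans (le_of_eq (by ring)) this
  have hVnn : ∀ x, 0 ≤ V x := fun x => le_trans (by positivity) (hVge x)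
  generalize hkfun k y = h at *
  generalize deriv (hkfun k) y = d at *
  have hI : Integrable (fun x => ζ x * V (h + x)) := by
    refine Integrable.mul_bdd (c := 18 / s * k ^ 2) hint
      (hVm.comp (by fun_prop)).aestronglyMeasurable (ae_of_all _ fun x => ?_)
    rw [Real.norm_of_nonneg (hVnn _)]; exact hVle _
  by_cases hy : |y| ≤ k
  · have hind : Integrable ({y : ℝ | k < |y|}.indicator (fun x => x ^ 2 * ζ x)) :=
      h2.indicator (measurableSet_lt measurable_const (by fun_prop))
    have hle : ∫ x, ζ x * V (h + x) ≤ 2 / s * (9 * k ^ 2 - h ^ 2 - s / 2) := by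
      have e1 : ∫ x, ζ x * V (h + x) ≤ ∫ x, 2 / s * ((9 * k ^ 2 - h ^ 2) * ζ x - (2 * h) * (x * ζ x)
          - x ^ 2 * ζ x + 4 * {y : ℝ | k < |y|}.indicator (fun x => x ^ 2 * ζ x) x) := by
        refine integral_mono hI (((((hint.const_mul _).sub (h1.const_mul _)).sub h2).add
          (hind.const_mul _)).const_mul _) fun x => ?_
        simp only [hV]
        have : 9 * k ^ 2 - min ((h + x) ^ 2) (4 * k ^ 2) ≤ 9 * k ^ 2 - (h + x) ^ 2 +
            4 * {y : ℝ | k < |y|}.indicator (fun x => x ^ 2) x := by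
          obtain ⟨ha, hb⟩ := abs_le.1 hh
          by_cases hx : k < |x|
          · rw [Set.indicator_of_mem (by exact hx)]
            have hx2 : (h + x) ^ 2 ≤ 4 * x ^ 2 := by
              have : |h + x| ≤ 2 * |x| := (abs_add_le h x).trans (by linarith)
              calc (h + x) ^ 2 = |h + x| ^ 2 := (sq_abs _).symm
                _ ≤ (2 * |x|) ^ 2 := by gcongr
                _ = 4 * x ^ 2 := by rw [mul_pow, sq_abs]; norm_num
            have : 0 ≤ min ((h + x) ^ 2) (4 * k ^ 2) := by positivity
            linarith
          · rw [Set.indicator_of_notMem (by exact hx)]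
            rw [min_eq_left]
            · linarith
            · have : |h + x| ≤ 2 * k := (abs_add_le h x).trans (by linarith)
              calc (h + x) ^ 2 = |h + x| ^ 2 := (sq_abs _).symm
                _ ≤ (2 * k) ^ 2 := by gcongr
                _ = 4 * k ^ 2 := by ring
        have e3 : {y : ℝ | k < |y|}.indicator (fun x => x ^ 2 * ζ x) x =
            {y : ℝ | k < |y|}.indicator (fun x => x ^ 2) x * ζ x := by
          by_cases hx : k < |x|
          · rw [Set.indicator_of_mem (by exact hx), Set.indicator_of_mem (by exact hx)]
          · rw [Set.indicator_of_notMem (by exact hx), Set.indicator_of_notMem (by exact hx), zero_mul]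
        rw [e3]
        have hm := mul_le_mul_of_nonneg_left this (show 0 ≤ 2 / s * ζ x from
          mul_nonneg (by positivity) (hζnn x))
        calc _ = 2 / s * ζ x * (9 * k ^ 2 - min ((h + x) ^ 2) (4 * k ^ 2)) := by ring
          _ ≤ _ := hm
          _ = _ := by ring
      refine e1.trans ?_
      have i1 : Integrable (fun x => (9 * k ^ 2 - h ^ 2) * ζ x) := hint.const_mul _
      have i2 : Integrable (fun x => (2 * h) * (x * ζ x)) := h1.const_mul _
      have i3 : Integrable (fun x => (9 * k ^ 2 - h ^ 2) * ζ x - (2 * h) * (x * ζ x)) := i1.sub i2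
      have i4 : Integrable (fun x => (9 * k ^ 2 - h ^ 2) * ζ x - (2 * h) * (x * ζ x)
        - x ^ 2 * ζ x) := i3.sub h2
      rw [integral_const_mul, integral_add i4 (hind.const_mul _), integral_sub i3 h2,
          integral_sub i1 i2, integral_const_mul, integral_const_mul,
          integral_const_mul, hζprob, hmean, hs]
      gcongr
      linarith
    have hy2 : y ^ 2 ≤ k ^ 2 := by rw [← sq_abs]; gcongr
    have hh2 : h ^ 2 ≤ k ^ 2 := by rw [← sq_abs]; gcongr
    have hVy : V y = 2 / s * (9 * k ^ 2 - y ^ 2) := by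
      rw [hV]; simp only; rw [min_eq_left (by linarith [sq_nonneg k])]
    have hm := mul_le_mul_of_nonneg_left hle hd0
    have hdiff : y ^ 2 - h ^ 2 ≤ 4 * k * (1 - d) := by
      have a1 : |y + h| ≤ 2 * k := (abs_add_le y h).trans (by linarith)
      calc y ^ 2 - h ^ 2 = (y - h) * (y + h) := by ring
        _ ≤ |(y - h) * (y + h)| := le_abs_self _
        _ = |y - h| * |y + h| := abs_mul _ _
        _ ≤ (2 * (1 - d)) * (2 * k) := by
            have := hhy hy
            have h0 := abs_nonneg (y - h)
            gcongr
            linarith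
        _ = _ := by ring
    have hp0 : 0 ≤ 1 - d := by have := hhy hy; have := abs_nonneg (y - h); linarith
    have main : d * (9 * k ^ 2 - h ^ 2 - s / 2) + s / 2 ≤ 9 * k ^ 2 - y ^ 2 := by
      have b1 : 0 ≤ (1 - d) * (k ^ 2 - h ^ 2) := mul_nonneg hp0 (by linarith)
      have b2 : 0 ≤ (1 - d) * (k ^ 2 - s) := mul_nonneg hp0 (by linarith)
      have b3 : 0 ≤ (1 - d) * (k * (k - 1)) := mul_nonneg hp0 (mul_nonneg (by linarith) (by linarith))
      have b4 : 0 ≤ (1 - d) * k ^ 2 := mul_nonneg hp0 (sq_nonneg k)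
      have b5 : 0 ≤ (1 - d) * s := mul_nonneg hp0 hs0.le
      nlinarith
    have hf := mul_le_mul_of_nonneg_left main (show 0 ≤ 2 / s by positivity)
    have e1 : 2 / s * (s / 2) = 1 := by field_simp
    rw [hVy]
    calc _ ≤ d * (2 / s * (9 * k ^ 2 - h ^ 2 - s / 2)) + 1 := by linarith
      _ = 2 / s * (d * (9 * k ^ 2 - h ^ 2 - s / 2) + s / 2) := by rw [← e1]; ring
      _ ≤ _ := hf
  · push Not at hy
    have hle : ∫ x, ζ x * V (h + x) ≤ 18 / s * k ^ 2 := by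
      have : ∫ x, ζ x * V (h + x) ≤ ∫ x, ζ x * (18 / s * k ^ 2) :=
        integral_mono hI (hint.mul_const _) fun x => mul_le_mul_of_nonneg_left (hVle _) (hζnn x)
      rwa [integral_mul_const, hζprob, one_mul] at this
    have h0 : 0 ≤ ∫ x, ζ x * V (h + x) := integral_nonneg fun x => mul_nonneg (hζnn x) (hVnn _)
    have h3 : d * (∫ x, ζ x * V (h + x)) ≤ 1 / 2 * (18 / s * k ^ 2) := by
      have := hhalf hy
      gcongr
    have h4 : 1 ≤ 1 / s * k ^ 2 := by rw [one_div_mul_eq_div, le_div_iff₀ hs0]; linarith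
    have h5 : 10 / s * k ^ 2 = 10 * (1 / s * k ^ 2) := by ring
    have h6 : 18 / s * k ^ 2 = 18 * (1 / s * k ^ 2) := by ring
    have := hVge y
    rw [h5] at this; rw [h6] at h3
    linarith

lemma aux_T0_meas (ζ : ℝ → ℝ) (hζmeas : Measurable ζ) (k : ℝ) (G : ℝ → ℝ)
    (hG : AEStronglyMeasurable G) : AEStronglyMeasurable (T0 ζ k G) := by
  unfold T0
  have hh := aux_meas_h k
  have hd : Measurable (deriv (hkfun k)) := measurable_deriv _
  have : AEStronglyMeasurable (fun p : ℝ × ℝ => G p.2 * deriv (hkfun k) p.2 * ζ (p.1 - hkfun k p.2))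
      (volume.prod volume) := by
    refine (hG.comp_snd.mul ?_).mul ?_
    · exact (hd.comp measurable_snd).aestronglyMeasurable
    · exact (hζmeas.comp (measurable_fst.sub (hh.comp measurable_snd))).aestronglyMeasurable
  exact this.integral_prod_right'

lemma aux_step (ζ : ℝ → ℝ) (hζmeas : Measurable ζ) (hζnn : ∀ x, 0 ≤ ζ x) (k : ℝ) (hk : 0 ≤ k)
    (hint : Integrable ζ)
    (V : ℝ → ℝ) (hVm : Measurable V) (hVnn : ∀ x, 0 ≤ V x) (B : ℝ) (hVB : ∀ x, V x ≤ B)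
    (hdrift : ∀ y, deriv (hkfun k) y * (∫ x, ζ x * V (hkfun k y + x)) + 1 ≤ V y)
    (G : ℝ → ℝ) (hG : AEStronglyMeasurable G) :
    (∫⁻ x, ‖G x‖ₑ) + ∫⁻ x, ‖T0 ζ k G x‖ₑ * ENNReal.ofReal (V x) ≤
      ∫⁻ x, ‖G x‖ₑ * ENNReal.ofReal (V x) := by
  have hh := aux_meas_h k
  have hd : Measurable (deriv (hkfun k)) := measurable_deriv _
  have hd0 := fun y => aux_deriv_nonneg k y hk
  have hGe : AEMeasurable (fun x => ‖G x‖ₑ) := hG.enorm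
  have s1 : ∫⁻ x, ‖T0 ζ k G x‖ₑ * ENNReal.ofReal (V x) ≤
      ∫⁻ x, ∫⁻ y, ‖G y‖ₑ * (ENNReal.ofReal (deriv (hkfun k) y) *
        (ENNReal.ofReal (ζ (x - hkfun k y)) * ENNReal.ofReal (V x))) := by
    refine lintegral_mono fun x => ?_
    calc _ ≤ (∫⁻ y, ‖G y * deriv (hkfun k) y * ζ (x - hkfun k y)‖ₑ) * ENNReal.ofReal (V x) := by
          gcongr
          exact enorm_integral_le_lintegral_enorm _
      _ = _ := by
          rw [← lintegral_mul_const' _ _ ENNReal.ofReal_ne_top]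
          refine lintegral_congr fun y => ?_
          rw [enorm_mul, enorm_mul, Real.enorm_of_nonneg (hd0 y), Real.enorm_of_nonneg (hζnn _)]
          ring
  have hm2 : Measurable (fun p : ℝ × ℝ => ENNReal.ofReal (deriv (hkfun k) p.2) *
        (ENNReal.ofReal (ζ (p.1 - hkfun k p.2)) * ENNReal.ofReal (V p.1))) := by
    have a1 : Measurable (fun p : ℝ × ℝ => deriv (hkfun k) p.2) := hd.comp measurable_snd
    have a2 : Measurable (fun p : ℝ × ℝ => ζ (p.1 - hkfun k p.2)) :=
      hζmeas.comp (measurable_fst.sub (hh.comp measurable_snd))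
    have a3 : Measurable (fun p : ℝ × ℝ => V p.1) := hVm.comp measurable_fst
    exact a1.ennreal_ofReal.mul (a2.ennreal_ofReal.mul a3.ennreal_ofReal)
  rw [lintegral_lintegral_swap ((hGe.comp_snd).mul hm2.aemeasurable)] at s1
  refine (add_le_add_right s1 _).trans ?_
  rw [← lintegral_add_left' hGe]
  refine lintegral_mono fun y => ?_
  simp only
  rw [lintegral_const_mul' _ _ enorm_ne_top, lintegral_const_mul' _ _ ENNReal.ofReal_ne_top]
  have hI : Integrable (fun x => ζ x * V (hkfun k y + x)) := by
    refine Integrable.mul_bdd (c := B) hint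
      (hVm.comp (by fun_prop)).aestronglyMeasurable (ae_of_all _ fun x => ?_)
    rw [Real.norm_of_nonneg (hVnn _)]; exact hVB _
  have e : ∫⁻ x, ENNReal.ofReal (ζ (x - hkfun k y)) * ENNReal.ofReal (V x) =
      ENNReal.ofReal (∫ x, ζ x * V (hkfun k y + x)) := by
    rw [ofReal_integral_eq_lintegral_ofReal hI (ae_of_all _ fun x => mul_nonneg (hζnn x) (hVnn _)),
      ← lintegral_sub_right_eq_self (fun x => ENNReal.ofReal (ζ x * V (hkfun k y + x))) (hkfun k y)]
    refine lintegral_congr fun x => ?_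
    rw [ENNReal.ofReal_mul (hζnn _), add_sub_cancel]
  rw [e, ← ENNReal.ofReal_mul (hd0 y)]
  nth_rewrite 1 [← mul_one ‖G y‖ₑ]
  rw [← mul_add]
  gcongr
  rw [← ENNReal.ofReal_one, ← ENNReal.ofReal_add zero_le_one]
  · exact ENNReal.ofReal_le_ofReal (by linarith [hdrift y])
  · exact mul_nonneg (hd0 y) (integral_nonneg fun x => mul_nonneg (hζnn x) (hVnn _))

/-- Proposition: summability bound for the iterates of T₀. -/
theorem stmt3
    (ζ : ℝ → ℝ) (hζmeas : Measurable ζ) (hζnn : ∀ x, 0 ≤ ζ x)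
    (hζprob : ∫ x, ζ x = 1)
    (hmean : ∫ x, x * ζ x = 0)
    (δ : ℝ) (hδ : 0 < δ) (Cδ : ℝ)
    (htail : ∀ x : ℝ, 0 ≤ x → ∫ y in {y : ℝ | x < |y|}, ζ y ≤ Cδ * Real.exp (-δ * x))
    (θ : ℝ) (hθ0 : 0 < θ) (hθ1 : θ ≤ 1) (Cθ : ℝ)
    (hHolder : ∀ x y : ℝ, |ζ x - ζ y| ≤ Cθ * |x - y| ^ θ)
 :
    ∃ C : ℝ, 0 < C ∧ ∃ k₀ : ℝ, 0 < k₀ ∧ ∀ k ≥ k₀, ∀ G : ℝ → ℝ, Integrable G →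
      ∑' n : ℕ, ∫⁻ x, ENNReal.ofReal |(T0 ζ k)^[n] G x|
        ≤ ENNReal.ofReal (k ^ 2 * Real.log k ^ C) * ∫⁻ x, ENNReal.ofReal |G x| := by
  have hint : Integrable ζ := by
    by_contra h
    rw [integral_undef h] at hζprob
    exact zero_ne_one hζprob
  have h2 := aux_second_moment ζ hζmeas hζnn hint δ hδ Cδ htail
  have h1 : Integrable (fun x => x * ζ x) := by
    refine (hint.add h2).mono' (by fun_prop) (ae_of_all _ fun x => ?_)
    simp only [Pi.add_apply]
    rw [norm_mul, Real.norm_of_nonneg (hζnn x), Real.norm_eq_abs]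
    have : |x| ≤ 1 + x ^ 2 := by rw [← sq_abs]; nlinarith [sq_nonneg (|x| - 1), abs_nonneg x]
    nlinarith [mul_le_mul_of_nonneg_right this (hζnn x)]
  obtain ⟨s, hs⟩ : ∃ s, ∫ x, x ^ 2 * ζ x = s := ⟨_, rfl⟩
  have hnn2 : 0 ≤ fun x => x ^ 2 * ζ x := fun x => mul_nonneg (sq_nonneg x) (hζnn x)
  have hs0 : 0 < s := by
    rw [← hs]
    refine lt_of_le_of_ne (integral_nonneg hnn2) fun h => ?_
    have h3 := (integral_eq_zero_iff_of_nonneg hnn2 h2).1 h.symm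
    have h4 : ζ =ᵐ[volume] 0 := by
      filter_upwards [h3, Measure.ae_ne volume (0 : ℝ)] with x hx hx0
      simpa [hx0] using hx
    rw [integral_congr_ae h4] at hζprob
    simp at hζprob
  have htl := aux_tail ζ h2 hζmeas (s / 8) (by positivity)
  have hlog := Real.tendsto_log_atTop.eventually_ge_atTop (18 / s)
  obtain ⟨k₁, hk₁⟩ := eventually_atTop.1 (htl.and hlog)
  refine ⟨1, one_pos, max k₁ (max 1 s), lt_max_of_lt_right (lt_max_of_lt_left one_pos), ?_⟩
  intro k hk G hG
  obtain ⟨htk, hlk⟩ := hk₁ k ((le_max_left _ _).trans hk)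
  have hk1 : 1 ≤ k := (le_max_left _ _).trans ((le_max_right _ _).trans hk)
  have hks : s ≤ k := (le_max_right _ _).trans ((le_max_right _ _).trans hk)
  have hks2 : s ≤ k ^ 2 := by nlinarith
  obtain ⟨V, hV⟩ : ∃ V : ℝ → ℝ,
    V = fun x => 2 / s * (9 * k ^ 2 - min (x ^ 2) (4 * k ^ 2)) := ⟨_, rfl⟩
  have hVm : Measurable V := by rw [hV]; fun_prop
  have hVle : ∀ x, V x ≤ 18 / s * k ^ 2 := by
    intro x; rw [hV]; simp only
    have : 0 ≤ min (x ^ 2) (4 * k ^ 2) := by positivity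
    have : 2 / s * (9 * k ^ 2 - min (x ^ 2) (4 * k ^ 2)) ≤ 2 / s * (9 * k ^ 2) := by
      gcongr; linarith
    refine this.trans (le_of_eq (by ring))
  have hVnn : ∀ x, 0 ≤ V x := by
    intro x; rw [hV]; simp only
    have : min (x ^ 2) (4 * k ^ 2) ≤ 4 * k ^ 2 := min_le_right _ _
    exact mul_nonneg (by positivity) (by nlinarith)
  have hdr := aux_drift ζ hζnn hint hζprob hmean h2 h1 s hs hs0 k hk1 hks2 htk V hV
  have step := aux_step ζ hζmeas hζnn k (by linarith) hint V hVm hVnn _ hVle hdr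
  have hmeas : ∀ n, AEStronglyMeasurable ((T0 ζ k)^[n] G) := by
    intro n
    induction n with
    | zero => exact hG.aestronglyMeasurable
    | succ n ih => rw [Function.iterate_succ_apply']; exact aux_T0_meas ζ hζmeas k _ ih
  have hind : ∀ N : ℕ, (∑ n ∈ Finset.range N, ∫⁻ x, ‖(T0 ζ k)^[n] G x‖ₑ) +
      ∫⁻ x, ‖(T0 ζ k)^[N] G x‖ₑ * ENNReal.ofReal (V x) ≤
      ∫⁻ x, ‖G x‖ₑ * ENNReal.ofReal (V x) := by
    intro N
    induction N with
    | zero => simp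
    | succ N ih =>
      refine le_trans ?_ ih
      rw [Finset.sum_range_succ, add_assoc, Function.iterate_succ_apply']
      gcongr
      exact step _ (hmeas N)
  simp only [← Real.enorm_eq_ofReal_abs]
  rw [ENNReal.tsum_eq_iSup_nat]
  refine iSup_le fun N => ?_
  refine (le_self_add.trans (hind N)).trans ?_
  rw [mul_comm, ← lintegral_mul_const' _ _ ENNReal.ofReal_ne_top]
  refine lintegral_mono fun x => ?_
  gcongr
  refine (hVle x).trans ?_
  rw [Real.rpow_one, mul_comm]
  gcongr
end

section
/- With C and k₀ as in the summability bound for T₀, for every k ≥ k₀ and every probability measure γ on ℝ with tail function G_γ(x) = γ((x, ∞)) such that TG_γ − G_γ ∈ L¹, one has |𝓛(k) − L_k[G_γ]| ≤ ‖G_{ν_k} − G_γ‖₁ ≤ k² (log k)^C ‖TG_γ − G_γ‖₁, where ν_k is the invariant probability of the chain X and 𝓛(k) = L_k[G_{ν_k}]. -/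
open MeasureTheory ProbabilityTheory Real Filter Set
open scoped ENNReal

noncomputable def tailFn (ν : Measure ℝ) (x : ℝ) : ℝ := (ν (Set.Ioi x)).toReal

/-- The operator T acting on tail functions of probability measures (so G(-∞) = 1). -/
noncomputable def Tprob (ζ : ℝ → ℝ) (k : ℝ) (G : ℝ → ℝ) (x : ℝ) : ℝ :=
  (∫ t in Set.Ioi (k + x), ζ t) + ∫ y, G y * deriv (hkfun k) y * ζ (x - hkfun k y)

noncomputable def Lk (k : ℝ) (G : ℝ → ℝ) : ℝ := ∫ x, G x / (1 + Real.exp (k - x))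

lemma hk_hasDerivAt (k y : ℝ) : HasDerivAt (hkfun k)
    (exp y / (exp (-k) + exp y) - exp (y - k) / (1 + exp (y - k))) y := by
  have e : hkfun k = fun x => Real.log (exp (-k) + exp x) - Real.log (1 + exp (x - k)) := by
    funext x
    unfold hkfun
    rw [Real.log_div (by positivity) (by positivity)]
  rw [e]
  have h1 : HasDerivAt (fun x : ℝ => exp (-k) + exp x) (exp y) y :=
    (Real.hasDerivAt_exp y).const_add _
  have h2 : HasDerivAt (fun x : ℝ => 1 + exp (x - k)) (exp (y - k)) y := by
    have := (((hasDerivAt_id y).sub_const k).exp).const_add 1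
    simpa using this
  exact (h1.log (by positivity)).sub (h2.log (by positivity))

lemma hk_deriv_pos {k : ℝ} (hk : 0 < k) (y : ℝ) : 0 < deriv (hkfun k) y := by
  rw [(hk_hasDerivAt k y).deriv, sub_pos, div_lt_div_iff₀ (by positivity) (by positivity)]
  have e : exp (y - k) = exp y * exp (-k) := by rw [← Real.exp_add]; ring_nf
  rw [e]
  have h1 : exp (-k) < 1 := by rw [Real.exp_lt_one_iff]; linarith
  have h0 := Real.exp_pos (-k)
  have hy := Real.exp_pos y
  have : exp (-k) * exp (-k) < 1 := by nlinarith
  nlinarith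

lemma hk_deriv_le {k : ℝ} (y : ℝ) : deriv (hkfun k) y ≤ 1 := by
  rw [(hk_hasDerivAt k y).deriv]
  have h1 : exp y / (exp (-k) + exp y) ≤ 1 := by
    rw [div_le_one (by positivity)]
    linarith [Real.exp_pos (-k)]
  have h2 : 0 ≤ exp (y - k) / (1 + exp (y - k)) := by positivity
  linarith

lemma hk_cont (k : ℝ) : Continuous (hkfun k) :=
  continuous_iff_continuousAt.2 fun y => (hk_hasDerivAt k y).continuousAt

lemma hk_mono {k : ℝ} (hk : 0 < k) : StrictMono (hkfun k) :=
  strictMono_of_deriv_pos (hk_deriv_pos hk)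

lemma hk_bounds {k : ℝ} (hk : 0 < k) (y : ℝ) : -k < hkfun k y ∧ hkfun k y < k := by
  unfold hkfun
  have e : exp (y - k) = exp y * exp (-k) := by rw [← Real.exp_add]; ring_nf
  have h1 : exp (-k) < 1 := by rw [Real.exp_lt_one_iff]; linarith
  have h0 := Real.exp_pos (-k)
  have hy := Real.exp_pos y
  have : exp (-k) * exp (-k) < 1 := by nlinarith
  have hkk : exp k * exp (-k) = 1 := by rw [← Real.exp_add]; simp
  have hkp := Real.exp_pos k
  constructor
  · rw [Real.lt_log_iff_exp_lt (by positivity), lt_div_iff₀ (by positivity), e]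
    nlinarith
  · rw [Real.log_lt_iff_lt_exp (by positivity), div_lt_iff₀ (by positivity), e]
    have : exp k * (1 + exp y * exp (-k)) = exp k + exp y := by
      linear_combination exp y * hkk
    rw [this]
    have : 1 < exp k := by rw [Real.one_lt_exp_iff]; exact hk
    linarith

lemma hk_surj {k : ℝ} (s : ℝ) (h1 : -k < s) (h2 : s < k) : ∃ y, hkfun k y = s := by
  have ha : 0 < exp s - exp (-k) := sub_pos.2 (Real.exp_lt_exp.2 h1)
  have hb : 0 < 1 - exp s * exp (-k) := by
    rw [← Real.exp_add, sub_pos, Real.exp_lt_one_iff]; linarith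
  refine ⟨Real.log ((exp s - exp (-k)) / (1 - exp s * exp (-k))), ?_⟩
  unfold hkfun
  have e : ∀ y, exp (y - k) = exp y * exp (-k) := by
    intro y; rw [← Real.exp_add]; ring_nf
  rw [e, Real.exp_log (by positivity)]
  have hpos : 0 < 1 + (exp s - exp (-k)) / (1 - exp s * exp (-k)) * exp (-k) := by positivity
  have hs : (exp (-k) + (exp s - exp (-k)) / (1 - exp s * exp (-k))) /
      (1 + (exp s - exp (-k)) / (1 - exp s * exp (-k)) * exp (-k)) = exp s := by
    have hb' : 1 - exp s * exp (-k) ≠ 0 := hb.ne'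
    generalize exp s = a at *
    generalize exp (-k) = b at *
    have hq : (a - b) / (1 - a * b) * (1 - a * b) = a - b := div_mul_cancel₀ _ hb'
    have hne : 1 + (a - b) / (1 - a * b) * b ≠ 0 := hpos.ne'
    rw [div_eq_iff hne]
    linear_combination hq
  rw [hs, Real.log_exp]

lemma hk_int {k : ℝ} (hk : 0 < k) : Integrable (deriv (hkfun k)) := by
  have h := (integrableOn_image_iff_integrableOn_abs_deriv_smul (s := Set.univ)
    (f := hkfun k) (f' := deriv (hkfun k)) MeasurableSet.univ
    (fun x _ => ((hk_hasDerivAt k x).differentiableAt.hasDerivAt).hasDerivWithinAt)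
    ((hk_mono hk).injective.injOn) (fun _ => (1 : ℝ))).1 ?_
  · rw [integrableOn_univ] at h
    refine h.congr (Filter.Eventually.of_forall fun x => ?_)
    simp [abs_of_pos (hk_deriv_pos hk x)]
  · have : hkfun k '' Set.univ ⊆ Set.Ioo (-k) k := by
      rintro _ ⟨y, -, rfl⟩
      exact hk_bounds hk y
    exact (integrableOn_const (by simp)).mono_set this

lemma chvar {k : ℝ} (hk : 0 < k) (ζ : ℝ → ℝ) (x z : ℝ) :
    ∫ y in Set.Iio z, deriv (hkfun k) y * ζ (x - hkfun k y)
      = ∫ t in Set.Ioo (x - hkfun k z) (k + x), ζ t := by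
  have him : (fun y => x - hkfun k y) '' Set.Iio z = Set.Ioo (x - hkfun k z) (k + x) := by
    ext t
    constructor
    · rintro ⟨y, hy, rfl⟩
      have := hk_mono hk hy
      have := hk_bounds hk y
      constructor <;> simp only <;> linarith
    · rintro ⟨h1, h2⟩
      have := hk_bounds hk z
      obtain ⟨y, hy⟩ := hk_surj (k := k) (x - t) (by linarith) (by linarith)
      refine ⟨y, ?_, by simp only [hy]; ring⟩
      rw [Set.mem_Iio, ← (hk_mono hk).lt_iff_lt, hy]
      linarith
  rw [← him, integral_image_eq_integral_abs_deriv_smul (f' := fun y => - deriv (hkfun k) y)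
    measurableSet_Iio]
  · refine setIntegral_congr_fun measurableSet_Iio fun y _ => ?_
    simp [abs_of_pos (hk_deriv_pos hk y)]
  · intro y _
    exact (((hk_hasDerivAt k y).differentiableAt.hasDerivAt).const_sub x).hasDerivWithinAt
  · intro a _ b _ hab
    exact (hk_mono hk).injective (by simpa using hab)

lemma zeta_bdd (ζ : ℝ → ℝ) (hint : Integrable ζ) (hζnn : ∀ x, 0 ≤ ζ x)
    (hζprob : ∫ x, ζ x = 1) (θ : ℝ) (hθ0 : 0 < θ) (Cθ : ℝ)
    (hHolder : ∀ x y : ℝ, |ζ x - ζ y| ≤ Cθ * |x - y| ^ θ) (x : ℝ) : ζ x ≤ 1 + |Cθ| := by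
  have h1 : ∫ t in Set.Icc x (x + 1), (ζ x - |Cθ|) ≤ ∫ t in Set.Icc x (x + 1), ζ t := by
    refine setIntegral_mono_on (integrableOn_const (by simp)) hint.integrableOn
      measurableSet_Icc fun t ht => ?_
    have h := hHolder x t
    have h3 : |x - t| ^ θ ≤ 1 := by
      refine Real.rpow_le_one (abs_nonneg _) ?_ hθ0.le
      rw [abs_le]; constructor <;> linarith [ht.1, ht.2]
    have h4 : 0 ≤ |x - t| ^ θ := by positivity
    have h5 : Cθ * |x - t| ^ θ ≤ |Cθ| := by
      nlinarith [le_abs_self Cθ, abs_nonneg Cθ]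
    linarith [le_abs_self (ζ x - ζ t)]
  have h2 : ∫ t in Set.Icc x (x + 1), ζ t ≤ 1 := by
    rw [← hζprob]
    exact setIntegral_le_integral hint (Filter.Eventually.of_forall hζnn)
  have h3 : ∫ t in Set.Icc x (x + 1), (ζ x - |Cθ|) = ζ x - |Cθ| := by
    simp
  linarith

lemma opB (ζ : ℝ → ℝ) (hm : Measurable ζ) (hζnn : ∀ x, 0 ≤ ζ x) (B : ℝ)
    (hB : ∀ x, ζ x ≤ B) (k : ℝ) (g : ℝ → ℝ) (hg : Integrable g) (x : ℝ) :
    Integrable (fun y => g y * ζ (x - hkfun k y)) := by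
  refine hg.mul_bdd (c := B) ?_ ?_
  · exact (hm.comp (measurable_const.sub (hk_cont k).measurable)).aestronglyMeasurable
  · refine Filter.Eventually.of_forall fun y => ?_
    rw [Real.norm_eq_abs, abs_of_nonneg (hζnn _)]
    exact hB _

lemma opA (ζ : ℝ → ℝ) (hm : Measurable ζ) (hint : Integrable ζ) (hζnn : ∀ x, 0 ≤ ζ x)
    (k : ℝ) (g : ℝ → ℝ) (hg : Integrable g) :
    Integrable (fun x => ∫ y, g y * ζ (x - hkfun k y)) := by
  have : Integrable (fun p : ℝ × ℝ => g p.2 * ζ (p.1 - hkfun k p.2))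
      ((volume : Measure ℝ).prod volume) := by
    rw [integrable_prod_iff']
    · constructor
      · refine Filter.Eventually.of_forall fun y => ?_
        exact (hint.comp_sub_right (hkfun k y)).const_mul (g y)
      · have : (fun y => ∫ x, ‖g y * ζ (x - hkfun k y)‖) = fun y => ‖g y‖ * ∫ x, ‖ζ x‖ := by
          funext y
          simp only [norm_mul]
          rw [integral_const_mul, integral_sub_right_eq_self (fun x => ‖ζ x‖)]
        simp only [this]
        exact hg.norm.mul_const _
    · refine hg.aestronglyMeasurable.comp_snd.mul ?_
      exact (hm.comp (measurable_fst.sub ((hk_cont k).measurable.comp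
        measurable_snd))).aestronglyMeasurable
  exact this.integral_prod_left

lemma tail_anti (ν : Measure ℝ) [IsProbabilityMeasure ν] : Antitone (tailFn ν) := by
  intro a b hab
  exact ENNReal.toReal_mono (measure_ne_top _ _) (measure_mono (Set.Ioi_subset_Ioi hab))

lemma tail_bd (ν : Measure ℝ) [IsProbabilityMeasure ν] (x : ℝ) :
    0 ≤ tailFn ν x ∧ tailFn ν x ≤ 1 := by
  refine ⟨ENNReal.toReal_nonneg, ?_⟩
  exact measureReal_le_one

lemma inv_T (ζ : ℝ → ℝ) (hm : Measurable ζ) (hint : Integrable ζ) (hζnn : ∀ x, 0 ≤ ζ x)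
    (B : ℝ) (hB : ∀ x, ζ x ≤ B) {k : ℝ} (hk : 0 < k)
    (ν : Measure ℝ) [IsProbabilityMeasure ν]
    (hinv : ∀ x : ℝ, tailFn ν x = ∫ y, (∫ t in Set.Ioi (x - hkfun k y), ζ t) ∂ν) (x : ℝ) :
    Tprob ζ k (tailFn ν) x = tailFn ν x := by
  have hφ : Integrable (fun y => deriv (hkfun k) y * ζ (x - hkfun k y)) :=
    opB ζ hm hζnn B hB k _ (hk_int hk) x
  set φ := fun y => deriv (hkfun k) y * ζ (x - hkfun k y) with hφd
  have hsplit : ∀ z, ∫ t in Set.Ioi (x - hkfun k z), ζ t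
      = (∫ t in Set.Ioi (k + x), ζ t) + ∫ y in Set.Iio z, φ y := by
    intro z
    have hb := hk_bounds hk z
    rw [hφd, chvar hk ζ x z, ← integral_Ioc_eq_integral_Ioo, add_comm,
      ← setIntegral_union Set.Ioc_disjoint_Ioi_same measurableSet_Ioi hint.integrableOn
        hint.integrableOn, Set.Ioc_union_Ioi_eq_Ioi (by linarith)]
  have hS : MeasurableSet {p : ℝ × ℝ | p.2 < p.1} := measurableSet_lt measurable_snd measurable_fst
  have hI : Integrable (fun p : ℝ × ℝ => {p : ℝ × ℝ | p.2 < p.1}.indicator (fun p => φ p.2) p)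
      (ν.prod volume) := (hφ.comp_snd ν).indicator hS
  have hsw := integral_integral_swap
    (f := fun z y => {p : ℝ × ℝ | p.2 < p.1}.indicator (fun p => φ p.2) (z, y)) hI
  have e1 : ∀ z, ∫ y, {p : ℝ × ℝ | p.2 < p.1}.indicator (fun p => φ p.2) (z, y)
      = ∫ y in Set.Iio z, φ y := by
    intro z
    rw [← integral_indicator measurableSet_Iio]
    rfl
  have e2 : ∀ y, ∫ z, {p : ℝ × ℝ | p.2 < p.1}.indicator (fun p => φ p.2) (z, y) ∂ν
      = tailFn ν y * φ y := by
    intro y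
    have : (fun z => {p : ℝ × ℝ | p.2 < p.1}.indicator (fun p => φ p.2) (z, y))
        = (Set.Ioi y).indicator (fun _ => φ y) := rfl
    rw [this, integral_indicator measurableSet_Ioi, setIntegral_const]
    rfl
  have hI1 : Integrable (fun z => ∫ y in Set.Iio z, φ y) ν := by
    have := hI.integral_prod_left
    simpa only [e1] using this
  simp only [e1, e2] at hsw
  rw [hinv x]
  simp only [hsplit]
  rw [integral_add (integrable_const _) hI1, hsw]
  unfold Tprob
  simp [hφd, mul_assoc]

/-- Corollary: comparison of the Lyapunov exponent with the value on any probability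
tail function, via the one-step defect. -/
theorem stmt4
    (ζ : ℝ → ℝ) (hζmeas : Measurable ζ) (hζnn : ∀ x, 0 ≤ ζ x)
    (hζprob : ∫ x, ζ x = 1)
    (hmean : ∫ x, x * ζ x = 0)
    (δ : ℝ) (hδ : 0 < δ) (Cδ : ℝ)
    (htail : ∀ x : ℝ, 0 ≤ x → ∫ y in {y : ℝ | x < |y|}, ζ y ≤ Cδ * Real.exp (-δ * x))
    (θ : ℝ) (hθ0 : 0 < θ) (hθ1 : θ ≤ 1) (Cθ : ℝ)
    (hHolder : ∀ x y : ℝ, |ζ x - ζ y| ≤ Cθ * |x - y| ^ θ)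
    (C k₀ : ℝ) (hC : 0 < C) (hk₀ : 0 < k₀)
    (hprop : ∀ k ≥ k₀, ∀ G : ℝ → ℝ, Integrable G →
      ∑' n : ℕ, ∫⁻ x, ENNReal.ofReal |(T0 ζ k)^[n] G x|
        ≤ ENNReal.ofReal (k ^ 2 * Real.log k ^ C) * ∫⁻ x, ENNReal.ofReal |G x|)
    (k : ℝ) (hk : k₀ ≤ k)
    (ν : Measure ℝ) [IsProbabilityMeasure ν]
    (hinv : ∀ x : ℝ, tailFn ν x = ∫ y, (∫ t in Set.Ioi (x - hkfun k y), ζ t) ∂ν)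
    (γ : Measure ℝ) [IsProbabilityMeasure γ]
    (hL1 : Integrable (fun x => Tprob ζ k (tailFn γ) x - tailFn γ x)) :
    ENNReal.ofReal |Lk k (tailFn ν) - Lk k (tailFn γ)|
        ≤ ∫⁻ x, ENNReal.ofReal |tailFn ν x - tailFn γ x| ∧
      ∫⁻ x, ENNReal.ofReal |tailFn ν x - tailFn γ x|
        ≤ ENNReal.ofReal (k ^ 2 * Real.log k ^ C)
            * ∫⁻ x, ENNReal.ofReal |Tprob ζ k (tailFn γ) x - tailFn γ x| := by
  have hint : Integrable ζ := by
    by_contra h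
    rw [integral_undef h] at hζprob
    norm_num at hζprob
  have hk0 : 0 < k := lt_of_lt_of_le hk₀ hk
  have hB := zeta_bdd ζ hint hζnn hζprob θ hθ0 Cθ hHolder
  have hdm : Measurable (deriv (hkfun k)) := measurable_deriv _
  have hmν := (tail_anti ν).measurable
  have hmγ := (tail_anti γ).measurable
  have hdint := hk_int hk0
  have key : ∀ G : ℝ → ℝ, Measurable G → (∀ x, |G x| ≤ 1) →
      Integrable (fun y => G y * deriv (hkfun k) y) := by
    intro G hG hb
    exact hdint.bdd_mul (c := 1) hG.aestronglyMeasurable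
      (Filter.Eventually.of_forall fun x => hb x)
  have hgν := key _ hmν (fun x => by rw [abs_of_nonneg (tail_bd ν x).1]; exact (tail_bd ν x).2)
  have hgγ := key _ hmγ (fun x => by rw [abs_of_nonneg (tail_bd γ x).1]; exact (tail_bd γ x).2)
  set D : ℝ → ℝ := fun x => tailFn ν x - tailFn γ x with hD
  set R : ℝ → ℝ := fun x => Tprob ζ k (tailFn γ) x - tailFn γ x with hR
  have hT : ∀ F G : ℝ → ℝ, Integrable (fun y => F y * deriv (hkfun k) y) →
      Integrable (fun y => G y * deriv (hkfun k) y) →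
      T0 ζ k (fun x => F x - G x) = fun x => T0 ζ k F x - T0 ζ k G x := by
    intro F G hF hG
    funext x
    unfold T0
    rw [← integral_sub (opB ζ hζmeas hζnn _ hB k _ hF x) (opB ζ hζmeas hζnn _ hB k _ hG x)]
    congr 1
    funext y
    ring
  have hRD : R = fun x => D x - T0 ζ k D x := by
    funext x
    have h1 := inv_T ζ hζmeas hint hζnn _ hB hk0 ν hinv x
    have h2 := congrFun (hT _ _ hgν hgγ) x
    simp only [hD, hR]
    rw [h2]
    unfold Tprob at h1 ⊢
    unfold T0
    linarith
  have hTDint : Integrable (T0 ζ k D) := by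
    refine opA ζ hζmeas hint hζnn k (fun y => D y * deriv (hkfun k) y) ?_
    refine (hgν.sub hgγ).congr (Filter.Eventually.of_forall fun y => ?_)
    simp only [hD, Pi.sub_apply]; ring
  have hDint : Integrable D := by
    refine (hL1.add hTDint).congr (Filter.Eventually.of_forall fun y => ?_)
    have := congrFun hRD y
    simp only [Pi.add_apply]
    change R y + _ = _
    rw [this]; ring
  have hmul : ∀ G : ℝ → ℝ, Integrable G → Integrable (fun y => G y * deriv (hkfun k) y) := by
    intro G hG
    refine hG.mul_bdd (c := 1) hdm.aestronglyMeasurable (Filter.Eventually.of_forall fun y => ?_)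
    rw [Real.norm_eq_abs, abs_of_pos (hk_deriv_pos hk0 y)]
    exact hk_deriv_le y
  have hTn : ∀ n, Integrable ((T0 ζ k)^[n] D) := by
    intro n
    induction n with
    | zero => exact hDint
    | succ n ih =>
      rw [Function.iterate_succ_apply']
      exact opA ζ hζmeas hint hζnn k _ (hmul _ ih)
  have hRn : ∀ n, (T0 ζ k)^[n] R = fun x => (T0 ζ k)^[n] D x - (T0 ζ k)^[n+1] D x := by
    intro n
    induction n with
    | zero => exact hRD
    | succ n ih =>
      rw [Function.iterate_succ_apply', ih, hT _ _ (hmul _ (hTn n)) (hmul _ (hTn (n+1)))]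
      simp only [Function.iterate_succ_apply']
  constructor
  · set w : ℝ → ℝ := fun x => 1 / (1 + Real.exp (k - x)) with hw
    have hwm : Measurable w := by fun_prop
    have hwb : ∀ x, |w x| ≤ 1 := by
      intro x
      simp only [hw]
      rw [abs_of_pos (by positivity), div_le_one (by positivity)]
      linarith [Real.exp_pos (k - x)]
    have hDw : Integrable (fun x => D x * w x) :=
      hDint.mul_bdd (c := 1) hwm.aestronglyMeasurable (Filter.Eventually.of_forall hwb)
    have eL : ∀ G : ℝ → ℝ, Lk k G = ∫ x, G x * w x := by
      intro G
      unfold Lk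
      simp only [hw, div_eq_mul_one_div (G _)]
    have hdiff : Lk k (tailFn ν) - Lk k (tailFn γ) = ∫ x, D x * w x ∨
        Lk k (tailFn ν) - Lk k (tailFn γ) = 0 := by
      rw [eL, eL]
      by_cases h : Integrable (fun x => tailFn γ x * w x)
      · left
        have h' : Integrable (fun x => tailFn ν x * w x) := by
          refine (hDw.add h).congr (Filter.Eventually.of_forall fun y => ?_)
          simp only [hD, Pi.add_apply]; ring
        rw [← integral_sub h' h]
        congr 1
        funext y
        simp only [hD]; ring
      · right
        have h' : ¬ Integrable (fun x => tailFn ν x * w x) := by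
          intro h'
          apply h
          refine (h'.sub hDw).congr (Filter.Eventually.of_forall fun y => ?_)
          simp only [hD, Pi.sub_apply]; ring
        rw [integral_undef h, integral_undef h', sub_zero]
    rcases hdiff with h | h
    · rw [h, ← ofReal_integral_eq_lintegral_ofReal hDint.abs
        (Filter.Eventually.of_forall fun x => abs_nonneg _)]
      apply ENNReal.ofReal_le_ofReal
      refine abs_integral_le_integral_abs.trans (integral_mono hDw.abs hDint.abs fun x => ?_)
      simp only [abs_mul]
      exact mul_le_of_le_one_right (abs_nonneg _) (hwb x)
    · rw [h]; simp
  · have hstep : ∀ n, ∫⁻ x, ENNReal.ofReal |(T0 ζ k)^[n] D x|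
        ≤ (∫⁻ x, ENNReal.ofReal |(T0 ζ k)^[n] R x|)
          + ∫⁻ x, ENNReal.ofReal |(T0 ζ k)^[n+1] D x| := by
      intro n
      rw [← lintegral_add_right' _ ((hTn (n+1)).abs.aestronglyMeasurable.aemeasurable.ennreal_ofReal)]
      refine lintegral_mono fun x => ?_
      rw [← ENNReal.ofReal_add (abs_nonneg _) (abs_nonneg _), hRn n]
      apply ENNReal.ofReal_le_ofReal
      have := abs_add_le ((T0 ζ k)^[n] D x - (T0 ζ k)^[n+1] D x) ((T0 ζ k)^[n+1] D x)
      simpa using this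
    have hsum : ∀ N, ∫⁻ x, ENNReal.ofReal |D x|
        ≤ (∑ n ∈ Finset.range N, ∫⁻ x, ENNReal.ofReal |(T0 ζ k)^[n] R x|)
          + ∫⁻ x, ENNReal.ofReal |(T0 ζ k)^[N] D x| := by
      intro N
      induction N with
      | zero => simp
      | succ N ih =>
        rw [Finset.sum_range_succ, add_assoc]
        exact ih.trans (add_le_add le_rfl (hstep N))
    have hfin : ∑' n : ℕ, ∫⁻ x, ENNReal.ofReal |(T0 ζ k)^[n] D x| ≠ ⊤ := by
      refine ne_top_of_le_ne_top ?_ (hprop k hk D hDint)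
      refine ENNReal.mul_ne_top ENNReal.ofReal_ne_top ?_
      rw [← ofReal_integral_eq_lintegral_ofReal hDint.abs
        (Filter.Eventually.of_forall fun x => abs_nonneg _)]
      exact ENNReal.ofReal_ne_top
    have hlim := ENNReal.tendsto_atTop_zero_of_tsum_ne_top hfin
    have hlim2 := hlim.const_add (∑' n : ℕ, ∫⁻ x, ENNReal.ofReal |(T0 ζ k)^[n] R x|)
    rw [add_zero] at hlim2
    refine le_trans ?_ (hprop k hk R hL1)
    refine ge_of_tendsto' hlim2 fun N => (hsum N).trans ?_
    exact add_le_add (ENNReal.sum_le_tsum _) le_rfl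
end

section
/- The Markov chain Y defined by Y_{n+1} = 𝚣_{n+1} + h(Y_n) has a unique (up to a multiplicative constant) invariant σ-finite measure ν; this measure satisfies ν((−∞, x]) < ∞ for every x ∈ ℝ, but ν(ℝ) = ∞. -/
open MeasureTheory ProbabilityTheory Real Filter Set
open scoped ENNReal

noncomputable def hY (y : ℝ) : ℝ := y + Real.log (1 + Real.exp (-y))

/-- A σ-finite measure ν is invariant for the chain Y_{n+1} = z_{n+1} + hY (Y_n),
where the increments have density ζ. -/
def IsInvariantY (ζ : ℝ → ℝ) (ν : Measure ℝ) : Prop :=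
  ∀ g : ℝ → ℝ≥0∞, Measurable g →
    ∫⁻ z, g z ∂ν = ∫⁻ y, ∫⁻ z, g (z + hY y) * ENNReal.ofReal (ζ z) ∂volume ∂ν

noncomputable def kop {α : Type*} [MeasurableSpace α] (κ : Kernel α α) (f : α → ℝ≥0∞) : α → ℝ≥0∞ :=
  fun y => ∫⁻ x, f x ∂(κ y)

lemma kop_meas {α : Type*} [MeasurableSpace α] (κ : Kernel α α) {f : α → ℝ≥0∞}
    (hf : Measurable f) : Measurable (kop κ f) := hf.lintegral_kernel

lemma kop_iter_meas {α : Type*} [MeasurableSpace α] (κ : Kernel α α) {f : α → ℝ≥0∞}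
    (hf : Measurable f) (n : ℕ) : Measurable ((kop κ)^[n] f) := by
  induction n with
  | zero => exact hf
  | succ n ih => rw [Function.iterate_succ_apply']; exact kop_meas κ ih

lemma kop_mono {α : Type*} [MeasurableSpace α] (κ : Kernel α α) {f g : α → ℝ≥0∞}
    (h : f ≤ g) : kop κ f ≤ kop κ g := fun _ => lintegral_mono h

noncomputable def phis {α : Type*} [MeasurableSpace α] (Q : Kernel α α) (φ : Measure α) : ℕ → Measure α
  | 0 => φ
  | n + 1 => (phis Q φ n).bind Q

lemma phis_lint {α : Type*} [MeasurableSpace α] (Q : Kernel α α) (φ : Measure α) (n : ℕ)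
    {f : α → ℝ≥0∞} (hf : Measurable f) :
    ∫⁻ x, f x ∂(phis Q φ (n+1)) = ∫⁻ x, kop Q f x ∂(phis Q φ n) := by
  rw [phis, Measure.lintegral_bind Q.measurable.aemeasurable hf.aemeasurable]; rfl

lemma phis_lint' {α : Type*} [MeasurableSpace α] (Q : Kernel α α) (φ : Measure α) (n : ℕ)
    {f : α → ℝ≥0∞} (hf : Measurable f) :
    ∫⁻ x, f x ∂(phis Q φ n) = ∫⁻ x, (kop Q)^[n] f x ∂φ := by
  induction n generalizing f with
  | zero => rfl
  | succ n ih => rw [phis_lint Q φ n hf, ih (kop_meas Q hf), Function.iterate_succ_apply]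

lemma inv_iter {α : Type*} [MeasurableSpace α] (P : Kernel α α) (ν : Measure α)
    (h : ∀ f : α → ℝ≥0∞, Measurable f → ∫⁻ x, f x ∂ν = ∫⁻ x, kop P f x ∂ν) (n : ℕ)
    {f : α → ℝ≥0∞} (hf : Measurable f) : ∫⁻ x, (kop P)^[n] f x ∂ν = ∫⁻ x, f x ∂ν := by
  induction n with
  | zero => rfl
  | succ n ih => rw [Function.iterate_succ_apply', ← h _ (kop_iter_meas P hf n), ih]

theorem nummelin {α : Type*} [MeasurableSpace α] (P Q : Kernel α α) (C : Set α)
    (hC : MeasurableSet C) (φ : Measure α) [IsFiniteMeasure φ] (hφ : φ ≠ 0)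
    (hPQ : ∀ f : α → ℝ≥0∞, Measurable f → ∀ y,
      kop P f y = kop Q f y + C.indicator (fun _ => 1) y * ∫⁻ x, f x ∂φ)
    (hP : ∀ y, P y univ = 1)
    (hU : ∀ y, Tendsto (fun n => (kop Q)^[n] (fun _ => 1) y) atTop (nhds 0))
    (hacc : ∀ y, ∃ n, 0 < (kop P)^[n] (C.indicator (fun _ => 1)) y) :
    ∃ ν : Measure α, ν ≠ 0 ∧ SigmaFinite ν ∧
      (∀ f : α → ℝ≥0∞, Measurable f → ∫⁻ x, f x ∂ν = ∫⁻ x, kop P f x ∂ν) ∧ ν C = 1 ∧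
      ∀ ν' : Measure α, ν' ≠ 0 → SigmaFinite ν' →
        (∀ f : α → ℝ≥0∞, Measurable f → ∫⁻ x, f x ∂ν' = ∫⁻ x, kop P f x ∂ν') →
        ∃ c : ℝ≥0∞, 0 < c ∧ c < ⊤ ∧ ν' = c • ν := by
  classical
  have hIC : Measurable (C.indicator (fun _ => (1:ℝ≥0∞))) := measurable_const.indicator hC
  have hle1 : ∀ n y, (kop P)^[n] (C.indicator (fun _ => 1)) y ≤ 1 := by
    intro n
    induction n with
    | zero => intro y; simp only [Function.iterate_zero, id]; exact indicator_le_self' (by simp) y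
    | succ n ih =>
      intro y; rw [Function.iterate_succ_apply']
      calc kop P _ y ≤ ∫⁻ x, 1 ∂(P y) := lintegral_mono ih
        _ = 1 := by simp [hP]
  -- G
  let G : α → ℝ≥0∞ := fun y => ∑' n : ℕ, (2⁻¹:ℝ≥0∞)^(n+1) * (kop P)^[n] (C.indicator (fun _ => 1)) y
  have hGm : Measurable G := by
    refine Measurable.tsum fun n => ?_
    exact (kop_iter_meas P hIC n).const_mul _
  have hsum : ∑' n : ℕ, (2⁻¹:ℝ≥0∞)^(n+1) = 1 := ENNReal.tsum_geometric_add_one _ |>.trans (by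
    rw [ENNReal.one_sub_inv_two, inv_inv]; exact ENNReal.inv_mul_cancel (by simp) (by simp))
  have hGpos : ∀ y, G y ≠ 0 := by
    intro y h0
    obtain ⟨n, hn⟩ := hacc y
    have := (ENNReal.tsum_eq_zero.1 h0) n
    rw [mul_eq_zero] at this
    rcases this with h | h
    · simp at h
    · exact hn.ne' h
  have hGtop : ∀ y, G y ≠ ⊤ := by
    intro y
    have : G y ≤ 1 := by
      rw [← hsum]
      exact ENNReal.tsum_le_tsum fun n => by
        calc _ ≤ (2⁻¹:ℝ≥0∞)^(n+1) * 1 := by gcongr; exact hle1 n y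
          _ = _ := mul_one _
    exact ne_top_of_le_ne_top (by simp) this
  have hGint : ∀ ν : Measure α, (∀ f : α → ℝ≥0∞, Measurable f → ∫⁻ x, f x ∂ν = ∫⁻ x, kop P f x ∂ν) →
      ∫⁻ x, G x ∂ν = ν C := by
    intro ν hν
    rw [lintegral_tsum (fun n => ((kop_iter_meas P hIC n).const_mul _).aemeasurable)]
    have : ∀ n : ℕ, ∫⁻ a, 2⁻¹ ^ (n + 1) * (kop P)^[n] (C.indicator fun x ↦ 1) a ∂ν
        = 2⁻¹ ^ (n + 1) * ν C := by
      intro n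
      rw [lintegral_const_mul _ (kop_iter_meas P hIC n), inv_iter P ν hν n hIC,
        lintegral_indicator_const hC, one_mul]
    simp_rw [this]
    rw [ENNReal.tsum_mul_right, hsum, one_mul]
  let ν : Measure α := Measure.sum (phis Q φ)
  have hνl : ∀ f : α → ℝ≥0∞, ∫⁻ x, f x ∂ν = ∑' n, ∫⁻ x, f x ∂(phis Q φ n) := fun f =>
    lintegral_sum_measure f _
  have hmass : ∀ N, φ univ = phis Q φ N univ + φ univ * ∑ n ∈ Finset.range N, phis Q φ n C := by
    intro N
    induction N with
    | zero => simp [phis]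
    | succ N ih =>
      have h1 : phis Q φ N univ = phis Q φ (N+1) univ + φ univ * phis Q φ N C := by
        have hk : ∀ y, (1:ℝ≥0∞) = kop Q (fun _ => 1) y + C.indicator (fun _ => 1) y * φ univ := by
          intro y
          have := hPQ (fun _ => 1) measurable_const y
          simp only [kop, lintegral_one, hP] at this
          simpa [kop] using this
        calc phis Q φ N univ = ∫⁻ y, 1 ∂(phis Q φ N) := by simp
          _ = ∫⁻ y, (kop Q (fun _ => 1) y + C.indicator (fun _ => 1) y * φ univ) ∂(phis Q φ N) := by
              exact lintegral_congr hk
          _ = _ := by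
            rw [lintegral_add_left (kop_meas Q measurable_const), ← phis_lint Q φ N measurable_const,
              lintegral_mul_const _ hIC, lintegral_indicator_const hC]
            simp [mul_comm]
      rw [Finset.sum_range_succ, mul_add]
      conv_lhs => rw [ih, h1]
      ring
  have hφ0 : φ univ ≠ 0 := by simpa using hφ
  have hφt : φ univ ≠ ⊤ := measure_ne_top φ _
  have hQle : ∀ n y, (kop Q)^[n] (fun _ => 1) y ≤ 1 := by
    intro n
    induction n with
    | zero => intro y; simp
    | succ n ih =>
      intro y; rw [Function.iterate_succ_apply']
      calc kop Q _ y ≤ kop Q (fun _ => 1) y := lintegral_mono ih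
        _ ≤ kop P (fun _ => 1) y := by rw [hPQ _ measurable_const]; exact le_self_add
        _ = 1 := by simp [kop, hP]
  have hlim : Tendsto (fun N => phis Q φ N univ) atTop (nhds 0) := by
    have : ∀ N, phis Q φ N univ = ∫⁻ x, (kop Q)^[N] (fun _ => 1) x ∂φ := by
      intro N; rw [← phis_lint' Q φ N measurable_const]; simp
    simp_rw [this]
    have := tendsto_lintegral_of_dominated_convergence (μ := φ)
      (F := fun N x => (kop Q)^[N] (fun _ => 1) x) (f := fun _ => 0) (fun _ => 1)
      (fun n => kop_iter_meas Q measurable_const n)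
      (fun n => ae_of_all _ (hQle n)) (by simp) (ae_of_all _ hU)
    simpa using this
  have hνC : ν C = 1 := by
    have e : ν C = ∑' n, phis Q φ n C := Measure.sum_apply _ hC
    have t1 : Tendsto (fun N => phis Q φ N univ + φ univ * ∑ n ∈ Finset.range N, phis Q φ n C) atTop
        (nhds (0 + φ univ * ν C)) := by
      refine hlim.add (ENNReal.Tendsto.const_mul ?_ (Or.inr hφt))
      rw [e]; exact ENNReal.tendsto_nat_tsum _
    have t2 : Tendsto (fun N => phis Q φ N univ + φ univ * ∑ n ∈ Finset.range N, phis Q φ n C) atTop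
        (nhds (φ univ)) := by
      simp_rw [← hmass]; exact tendsto_const_nhds
    have := tendsto_nhds_unique t1 t2
    rw [zero_add] at this
    have h2 : φ univ * ν C = φ univ * 1 := by rw [this, mul_one]
    exact (ENNReal.mul_right_inj hφ0 hφt).1 h2
  have hνinv : ∀ f : α → ℝ≥0∞, Measurable f → ∫⁻ x, f x ∂ν = ∫⁻ x, kop P f x ∂ν := by
    intro f hf
    have : ∫⁻ x, kop P f x ∂ν = ∫⁻ x, kop Q f x ∂ν + ∫⁻ x, f x ∂φ := by
      simp_rw [hPQ f hf]
      rw [lintegral_add_left (kop_meas Q hf), lintegral_mul_const _ hIC,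
        lintegral_indicator_const hC, hνC]
      simp
    rw [this, hνl, hνl, tsum_eq_zero_add' ENNReal.summable, add_comm]
    simp_rw [phis_lint Q φ _ hf]
    rfl
  have hν0 : ν ≠ 0 := by intro h; rw [h] at hνC; simp at hνC
  have hsf : SigmaFinite ν := by
    have hfin : IsFiniteMeasure (ν.withDensity G) :=
      isFiniteMeasure_withDensity (by rw [hGint ν hνinv, hνC]; simp)
    have h2 : (ν.withDensity G).withDensity (fun x => (G x)⁻¹) = ν := by
      have := withDensity_inv_same (μ := ν) hGm (ae_of_all _ hGpos) (ae_of_all _ hGtop)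
      simpa using this
    rw [← h2]
    refine SigmaFinite.withDensity_of_ne_top (f := fun x => (G x)⁻¹) ?_
    exact ae_of_all _ fun x => by simpa using hGpos x
  refine ⟨ν, hν0, hsf, hνinv, hνC, ?_⟩
  intro ν' hν'0 hν'sf hinv
  set c := ν' C with hc
  have hrec : ∀ f : α → ℝ≥0∞, Measurable f →
      ∫⁻ x, f x ∂ν' = ∫⁻ x, kop Q f x ∂ν' + c * ∫⁻ x, f x ∂φ := by
    intro f hf
    rw [hinv f hf]
    simp_rw [hPQ f hf]
    rw [lintegral_add_left (kop_meas Q hf), lintegral_mul_const _ hIC,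
      lintegral_indicator_const hC, one_mul]
  have hge : ∀ N, ∀ f : α → ℝ≥0∞, Measurable f →
      c * ∑ n ∈ Finset.range N, ∫⁻ x, f x ∂(phis Q φ n) ≤ ∫⁻ x, f x ∂ν' := by
    intro N
    induction N with
    | zero => simp
    | succ N ih =>
      intro f hf
      rw [Finset.sum_range_succ', mul_add, hrec f hf]
      refine add_le_add ?_ le_rfl
      simp_rw [phis_lint Q φ _ hf]
      exact ih _ (kop_meas Q hf)
  have hge' : ∀ f : α → ℝ≥0∞, Measurable f → c * ∫⁻ x, f x ∂ν ≤ ∫⁻ x, f x ∂ν' := by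
    intro f hf
    rw [hνl, ENNReal.tsum_eq_iSup_nat, ENNReal.mul_iSup]
    exact iSup_le fun N => hge N f hf
  have hle : c • ν ≤ ν' := by
    refine Measure.le_iff.2 fun s hs => ?_
    have := hge' (s.indicator (fun _ => 1)) (measurable_const.indicator hs)
    simpa [lintegral_indicator_const hs] using this
  have hct : c ≠ ⊤ := by
    intro h
    -- ν = 0 on the spanning sets
    have : ν = 0 := by
      rw [← Measure.measure_univ_eq_zero, ← iUnion_spanningSets ν', measure_iUnion_null_iff]
      intro i
      by_contra hne
      have h1 := hle (spanningSets ν' i)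
      rw [Measure.smul_apply, h, smul_eq_mul, ENNReal.top_mul hne] at h1
      exact (measure_spanningSets_lt_top ν' i).ne (top_le_iff.1 h1)
    exact hν0 this
  have hGν : ∫⁻ x, G x ∂(c • ν) = ∫⁻ x, G x ∂ν' := by
    rw [lintegral_smul_measure, hGint ν hνinv, hGint ν' hinv, hνC]; simp [hc]
  have hEq : (c • ν).withDensity G = ν'.withDensity G := by
    have hf1 : IsFiniteMeasure (ν'.withDensity G) :=
      isFiniteMeasure_withDensity (by rw [hGint ν' hinv]; exact hct)
    have hmono : (c • ν).withDensity G ≤ ν'.withDensity G := by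
      refine Measure.le_iff.2 fun s hs => ?_
      rw [withDensity_apply _ hs, withDensity_apply _ hs]
      exact lintegral_mono' (Measure.restrict_mono le_rfl hle) le_rfl
    have hf2 : IsFiniteMeasure ((c • ν).withDensity G) :=
      isFiniteMeasure_withDensity (by rw [hGν, hGint ν' hinv]; exact hct)
    refine Measure.eq_of_le_of_measure_univ_eq hmono ?_
    rw [withDensity_apply _ MeasurableSet.univ, withDensity_apply _ MeasurableSet.univ,
      Measure.restrict_univ, Measure.restrict_univ, hGν]
  have key : ν' = c • ν := by
    have a1 := withDensity_inv_same (μ := ν') hGm (ae_of_all _ hGpos) (ae_of_all _ hGtop)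
    have a2 := withDensity_inv_same (μ := c • ν) hGm (ae_of_all _ hGpos) (ae_of_all _ hGtop)
    rw [← a1, ← hEq, a2]
  refine ⟨c, ?_, hct.lt_top, key⟩
  rw [pos_iff_ne_zero]
  intro h0
  rw [h0, zero_smul] at key
  exact hν'0 key

lemma kop_iter_mono {α : Type*} [MeasurableSpace α] (κ : Kernel α α) {f g : α → ℝ≥0∞}
    (h : f ≤ g) (n : ℕ) : (kop κ)^[n] f ≤ (kop κ)^[n] g := by
  induction n with
  | zero => exact h
  | succ n ih => rw [Function.iterate_succ_apply', Function.iterate_succ_apply']; exact kop_mono κ ih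

lemma kop_iter_smul {α : Type*} [MeasurableSpace α] (κ : Kernel α α) {f : α → ℝ≥0∞}
    (hf : Measurable f) (c : ℝ≥0∞) (n : ℕ) :
    (kop κ)^[n] (fun y => c * f y) = fun y => c * (kop κ)^[n] f y := by
  induction n with
  | zero => rfl
  | succ n ih =>
    rw [Function.iterate_succ_apply', Function.iterate_succ_apply', ih]
    funext y
    exact lintegral_const_mul _ (kop_iter_meas κ hf n)

lemma kop_iter_add {α : Type*} [MeasurableSpace α] (κ : Kernel α α) {f g : α → ℝ≥0∞}
    (hf : Measurable f) (n : ℕ) :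
    (kop κ)^[n] (fun y => f y + g y) = fun y => (kop κ)^[n] f y + (kop κ)^[n] g y := by
  induction n with
  | zero => rfl
  | succ n ih =>
    rw [Function.iterate_succ_apply', Function.iterate_succ_apply', Function.iterate_succ_apply', ih]
    funext y
    exact lintegral_add_left (kop_iter_meas κ hf n) _

lemma maxprin (u V γ : ℝ → ℝ) (K s η : ℝ) (hη : 0 < η) (hu : ∀ y, u y ≤ 1) (hs : 0 ≤ s)
    (hV : ∀ y, 0 ≤ V y) (hD : ∀ y ≤ K, u y ≤ s)
    (hstep : ∀ m, 0 ≤ m → (∀ y, u y ≤ m + η * V y) → ∀ y, K < y → u y ≤ m + η * (V y - γ y))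
    (hVtop : ∀ A : ℝ, ∃ R : ℝ, ∀ y, R < y → A ≤ V y)
    (hγ : ∀ R, ∃ g : ℝ, 0 < g ∧ ∀ y, K < y → y ≤ R → g ≤ γ y) :
    ∀ y, u y ≤ s + η * V y := by
  obtain ⟨R, hR⟩ := hVtop (1 / η)
  obtain ⟨g, hg, hgγ⟩ := hγ R
  have main : ∀ k : ℕ, ∀ y, u y ≤ max s (1 - k * (η * g)) + η * V y := by
    intro k
    induction k with
    | zero =>
      intro y
      have := mul_nonneg hη.le (hV y)
      have h2 := le_max_right s (1 - ((0:ℕ):ℝ) * (η * g))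
      have h3 := hu y
      simp only [Nat.cast_zero, zero_mul, sub_zero] at h2 ⊢
      linarith
    | succ k ih =>
      intro y
      have hVy := mul_nonneg hη.le (hV y)
      have h1 := le_max_left s (1 - ((k+1:ℕ):ℝ) * (η * g))
      have h2 := le_max_right s (1 - ((k+1:ℕ):ℝ) * (η * g))
      by_cases hy : y ≤ K
      · have := hD y hy
        linarith
      push Not at hy
      by_cases hyR : y ≤ R
      · have h3 := hstep _ (le_max_of_le_left hs) ih y hy
        have h4 := mul_le_mul_of_nonneg_left (hgγ y hy hyR) hη.le
        have h5 : max s (1 - (k:ℝ) * (η * g)) ≤ max s (1 - ((k+1:ℕ):ℝ) * (η * g)) + η * g := by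
          apply max_le
          · have := mul_pos hη hg
            linarith
          · push_cast at h2 ⊢
            linarith
        linarith
      · push Not at hyR
        have h3 := hR y hyR
        have h4 := mul_le_mul_of_nonneg_left h3 hη.le
        rw [mul_one_div_cancel hη.ne'] at h4
        have := hu y
        linarith
  have hηg := mul_pos hη hg
  obtain ⟨k, hk⟩ := exists_nat_gt (1 / (η * g))
  intro y
  have h1 := main k y
  have h2 : max s (1 - (k:ℝ) * (η * g)) = s := by
    apply max_eq_left
    rw [div_lt_iff₀ hηg] at hk
    linarith
  rwa [h2] at h1

theorem recur (P Q : Kernel ℝ ℝ) (C : Set ℝ)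
    (hC : MeasurableSet C) (φ : Measure ℝ) [IsFiniteMeasure φ] (hφ : φ ≠ 0)
    (hPQ : ∀ f : ℝ → ℝ≥0∞, Measurable f → ∀ y,
      kop P f y = kop Q f y + C.indicator (fun _ => 1) y * ∫⁻ x, f x ∂φ)
    (hP : ∀ y, P y univ = 1)
    (V γ : ℝ → ℝ) (K : ℝ) (hVm : Measurable V) (hV : ∀ y, 0 ≤ V y)
    (hVtop : ∀ A : ℝ, ∃ R : ℝ, ∀ y, R < y → A ≤ V y)
    (hγ : ∀ R, ∃ g : ℝ, 0 < g ∧ ∀ y, K < y → y ≤ R → g ≤ γ y)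
    (hdrift : ∀ y, K < y → kop P (fun x => ENNReal.ofReal (V x)) y + ENNReal.ofReal (γ y)
      ≤ ENNReal.ofReal (V y))
    (hacc : ∃ n : ℕ, ∃ p : ℝ≥0∞, 0 < p ∧ ∀ y ≤ K, p ≤ (kop P)^[n] (C.indicator (fun _ => 1)) y) :
    ∀ y, Tendsto (fun n => (kop Q)^[n] (fun _ => 1) y) atTop (nhds 0) := by
  have hIC : Measurable (C.indicator (fun _ => (1:ℝ≥0∞))) := measurable_const.indicator hC
  have hQP : ∀ f : ℝ → ℝ≥0∞, Measurable f → kop Q f ≤ kop P f := fun f hf y => by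
    rw [hPQ f hf]; exact le_self_add
  have hP1 : ∀ n : ℕ, (kop P)^[n] (fun _ => 1) = fun _ => 1 := by
    intro n
    induction n with
    | zero => rfl
    | succ n ih => rw [Function.iterate_succ_apply', ih]; funext y; simp [kop, hP]
  have hQPn : ∀ n, ∀ f : ℝ → ℝ≥0∞, Measurable f → (kop Q)^[n] f ≤ (kop P)^[n] f := by
    intro n f hf
    induction n with
    | zero => exact le_rfl
    | succ n ih =>
      rw [Function.iterate_succ_apply', Function.iterate_succ_apply']
      exact (hQP _ (kop_iter_meas Q hf n)).trans (kop_mono P ih)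
  have hQ1 : kop Q (fun _ => 1) ≤ fun _ => 1 := (hQP _ measurable_const).trans (by
    have := hP1 1
    simp only [Function.iterate_one] at this
    rw [this])
  have hanti : Antitone (fun n => (kop Q)^[n] (fun _ => (1:ℝ≥0∞))) := by
    refine antitone_nat_of_succ_le fun n => ?_
    rw [Function.iterate_succ_apply]
    exact kop_iter_mono Q hQ1 n
  have hle1 : ∀ n y, (kop Q)^[n] (fun _ => (1:ℝ≥0∞)) y ≤ 1 := fun n y =>
    hanti (Nat.zero_le n) y
  set u : ℝ → ℝ≥0∞ := fun y => ⨅ n, (kop Q)^[n] (fun _ => 1) y with hu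
  have hum : Measurable u := Measurable.iInf fun n => kop_iter_meas Q measurable_const n
  have hu1 : ∀ y, u y ≤ 1 := fun y => iInf_le_of_le 0 le_rfl
  have hut : ∀ y, u y ≠ ⊤ := fun y => ne_top_of_le_ne_top (by simp) (hu1 y)
  have hQu : kop Q u = u := by
    funext y
    have : kop Q u y = ⨅ n, kop Q ((kop Q)^[n] (fun _ => 1)) y := by
      refine lintegral_iInf (fun n => kop_iter_meas Q measurable_const n) hanti ?_
      have := hQ1 y
      exact ne_top_of_le_ne_top (by simp) this
    rw [this]
    apply le_antisymm
    · refine le_iInf fun n => iInf_le_of_le n ?_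
      rw [← Function.iterate_succ_apply' (kop Q)]
      exact hanti (Nat.le_succ n) y
    · refine le_iInf fun n => iInf_le_of_le (n+1) ?_
      rw [Function.iterate_succ_apply']
  have hQnu : ∀ n, (kop Q)^[n] u = u := fun n => Function.iterate_fixed hQu n
  obtain ⟨n, p, hp, hacc⟩ := hacc
  -- uniform decay
  have hφ0 : φ univ ≠ 0 := by simpa using hφ
  have hdec : ∃ q : ℝ, 0 ≤ q ∧ q < 1 ∧ ∀ y ≤ K, (kop Q)^[n+1] (fun _ => 1) y ≤ ENNReal.ofReal q := by
    have h1 : ∀ y, (kop Q)^[n+1] (fun _ => 1) y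
        + φ univ * (kop P)^[n] (C.indicator (fun _ => 1)) y ≤ 1 := by
      intro y
      rw [Function.iterate_succ_apply]
      calc _ ≤ (kop P)^[n] (kop Q (fun _ => 1)) y
            + φ univ * (kop P)^[n] (C.indicator (fun _ => 1)) y := by
            gcongr
            exact hQPn n _ (kop_meas Q measurable_const) y
        _ = (kop P)^[n] (kop P (fun _ => 1)) y := by
            have e : kop P (fun _ => 1) = fun y => kop Q (fun _ => 1) y
                + φ univ * C.indicator (fun _ => 1) y := by
              funext y
              rw [hPQ _ measurable_const]
              simp [mul_comm]
            rw [e, kop_iter_add P (kop_meas Q measurable_const), kop_iter_smul P hIC]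
        _ = 1 := by rw [← Function.iterate_succ_apply, hP1]
        _ ≤ 1 := le_rfl
    have hr0 : φ univ * p ≠ 0 := mul_ne_zero hφ0 hp.ne'
    refine ⟨(1 - φ univ * p).toReal, ENNReal.toReal_nonneg, ?_, ?_⟩
    · have : 1 - φ univ * p < 1 := ENNReal.sub_lt_self (by simp) (by simp) hr0
      have h2 := (ENNReal.toReal_lt_toReal (this.trans (by simp)).ne (by simp)).2 this
      simpa using h2
    · intro y hy
      rw [ENNReal.ofReal_toReal (ne_top_of_le_ne_top (by simp) tsub_le_self)]
      have hpm : φ univ * p ≤ φ univ * (kop P)^[n] (C.indicator (fun _ => 1)) y := by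
        gcongr; exact hacc y hy
      have h2 := (add_le_add_right hpm ((kop Q)^[n+1] (fun _ => 1) y)).trans (h1 y)
      refine ENNReal.le_sub_of_add_le_right ?_ h2
      exact ne_top_of_le_ne_top (by simp) ((le_add_left le_rfl).trans h2)
  obtain ⟨q, hq0, hq1, hq⟩ := hdec
  have hstep : ∀ η, 0 < η → ∀ m, 0 ≤ m → (∀ y, (u y).toReal ≤ m + η * V y) → ∀ y, K < y →
      (u y).toReal ≤ m + η * (V y - γ y) := by
    intro η hη m hm h y hy
    have h1 : ∀ x, u x ≤ ENNReal.ofReal m + ENNReal.ofReal η * ENNReal.ofReal (V x) := by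
      intro x
      rw [← ENNReal.ofReal_mul hη.le, ← ENNReal.ofReal_add hm (mul_nonneg hη.le (hV x))]
      rw [← ENNReal.ofReal_toReal (hut x)]
      exact ENNReal.ofReal_le_ofReal (h x)
    have hγ0 : 0 ≤ γ y := by
      obtain ⟨g, hg, hg'⟩ := hγ y
      exact hg.le.trans (hg' y hy le_rfl)
    have h2 : u y ≤ ENNReal.ofReal m + ENNReal.ofReal η * kop P (fun x => ENNReal.ofReal (V x)) y := by
      calc u y = kop Q u y := by rw [hQu]
        _ ≤ kop P u y := hQP u hum y
        _ ≤ kop P (fun x => ENNReal.ofReal m + ENNReal.ofReal η * ENNReal.ofReal (V x)) y :=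
            kop_mono P h1 y
        _ = _ := by
          simp only [kop]
          rw [lintegral_add_left measurable_const, lintegral_const_mul _ hVm.ennreal_ofReal]
          simp [hP]
    have h3 : u y + ENNReal.ofReal η * ENNReal.ofReal (γ y)
        ≤ ENNReal.ofReal m + ENNReal.ofReal η * ENNReal.ofReal (V y) := by
      calc _ ≤ ENNReal.ofReal m + ENNReal.ofReal η * kop P (fun x => ENNReal.ofReal (V x)) y
            + ENNReal.ofReal η * ENNReal.ofReal (γ y) := by gcongr
        _ = ENNReal.ofReal m + ENNReal.ofReal η *
            (kop P (fun x => ENNReal.ofReal (V x)) y + ENNReal.ofReal (γ y)) := by ring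
        _ ≤ _ := by gcongr; exact hdrift y hy
    rw [← ENNReal.ofReal_mul hη.le, ← ENNReal.ofReal_mul hη.le,
      ← ENNReal.ofReal_add hm (mul_nonneg hη.le (hV y)), ← ENNReal.ofReal_toReal (hut y),
      ← ENNReal.ofReal_add ENNReal.toReal_nonneg (mul_nonneg hη.le hγ0)] at h3
    have h4 := (ENNReal.ofReal_le_ofReal_iff (add_nonneg hm (mul_nonneg hη.le (hV y)))).1 h3
    linarith
  have hall : ∀ k : ℕ, ∀ y, (u y).toReal ≤ q ^ k := by
    intro k
    induction k with
    | zero =>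
      intro y
      have := (ENNReal.toReal_le_toReal (hut y) (by simp)).2 (hu1 y)
      simpa using this
    | succ k ih =>
      have hqk : 0 ≤ q ^ k := pow_nonneg hq0 k
      have hD : ∀ y ≤ K, (u y).toReal ≤ q ^ (k+1) := by
        intro y hy
        have h1 : u ≤ fun y => ENNReal.ofReal (q ^ k) * 1 := by
          intro x
          rw [mul_one, ← ENNReal.ofReal_toReal (hut x)]
          exact ENNReal.ofReal_le_ofReal (ih x)
        have h2 := kop_iter_mono Q h1 (n+1) y
        rw [hQnu, kop_iter_smul Q measurable_const] at h2
        have h3 : u y ≤ ENNReal.ofReal (q ^ k) * ENNReal.ofReal q := h2.trans (mul_le_mul' le_rfl (hq y hy))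
        rw [← ENNReal.ofReal_mul hqk, ← pow_succ] at h3
        exact ENNReal.toReal_le_of_le_ofReal (pow_nonneg hq0 _) h3
      intro y
      refine le_of_forall_pos_le_add fun e he => ?_
      have hη : 0 < e / (V y + 1) := div_pos he (by have := hV y; linarith)
      have := maxprin (fun y => (u y).toReal) V γ K (q^(k+1)) (e / (V y + 1)) hη
        (fun y => by
          have := (ENNReal.toReal_le_toReal (hut y) (by simp)).2 (hu1 y)
          simpa using this) (pow_nonneg hq0 _) hV hD (hstep _ hη) hVtop hγ y
      refine this.trans ?_
      gcongr
      have hVy := hV y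
      rw [div_mul_eq_mul_div, div_le_iff₀ (by linarith)]
      nlinarith
  intro y
  have hu0 : u y = 0 := by
    have h1 : (u y).toReal ≤ 0 :=
      ge_of_tendsto' (tendsto_pow_atTop_nhds_zero_of_lt_one hq0 hq1) (fun k => hall k y)
    have h2 : (u y).toReal = 0 := le_antisymm h1 ENNReal.toReal_nonneg
    rcases (ENNReal.toReal_eq_zero_iff _).1 h2 with h | h
    · exact h
    · exact absurd h (hut y)
  rw [← hu0]
  exact tendsto_atTop_iInf (fun a b hab => hanti hab y)

lemma hY_eq (y : ℝ) : hY y = Real.log (1 + Real.exp y) := by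
  unfold hY
  conv_lhs => rw [← Real.log_exp y, Real.log_exp y]
  have h1 : Real.log (Real.exp y * (1 + Real.exp (-y))) = y + Real.log (1 + Real.exp (-y)) := by
    rw [Real.log_mul (Real.exp_pos y).ne' (by positivity), Real.log_exp]
  rw [← h1, mul_add, ← Real.exp_add]
  simp [add_comm]

lemma hY_cont : Continuous hY := by
  unfold hY
  refine continuous_id.add (Continuous.log (by fun_prop) fun x => by positivity)

lemma hY_gt (y : ℝ) : y < hY y := by
  unfold hY
  have : 0 < Real.log (1 + Real.exp (-y)) := Real.log_pos (by have := Real.exp_pos (-y); linarith)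
  linarith

lemma hY_le (y : ℝ) : hY y ≤ y + Real.exp (-y) := by
  unfold hY
  have := Real.log_le_sub_one_of_pos (show 0 < 1 + Real.exp (-y) by positivity)
  linarith

lemma hY_pos (y : ℝ) : 0 < hY y := by
  rw [hY_eq]
  exact Real.log_pos (by have := Real.exp_pos y; linarith)

lemma hY_deriv (y : ℝ) : HasDerivAt hY (Real.exp y / (1 + Real.exp y)) y := by
  have : hY = fun y => Real.log (1 + Real.exp y) := funext hY_eq
  rw [this]
  exact ((Real.hasDerivAt_exp y).const_add 1).log (by positivity)

lemma hY_lip (K x y : ℝ) (hx : x ≤ K) (hy : y ≤ K) :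
    |hY x - hY y| ≤ Real.exp K / (1 + Real.exp K) * |x - y| := by
  have := Convex.norm_image_sub_le_of_norm_hasDerivWithin_le (f := hY)
    (f' := fun y => Real.exp y / (1 + Real.exp y)) (s := Iic K)
    (C := Real.exp K / (1 + Real.exp K)) (x := y) (y := x)
    (fun z _ => (hY_deriv z).hasDerivWithinAt) (fun z hz => by
      rw [Real.norm_of_nonneg (by positivity), div_le_div_iff₀ (by positivity) (by positivity)]
      have := Real.exp_le_exp.2 (mem_Iic.1 hz)
      nlinarith [Real.exp_pos z, Real.exp_pos K]) (convex_Iic K) hy hx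
  simpa [Real.norm_eq_abs] using this

lemma hY_lip1 (x y : ℝ) : |hY x - hY y| ≤ |x - y| := by
  refine (hY_lip (max x y) x y (le_max_left _ _) (le_max_right _ _)).trans ?_
  have : Real.exp (max x y) / (1 + Real.exp (max x y)) ≤ 1 := by
    rw [div_le_one (by positivity)]; linarith
  exact mul_le_of_le_one_left (abs_nonneg _) this

lemma hY_mono : Monotone hY := by
  intro x y h
  rw [hY_eq, hY_eq]
  have := Real.exp_le_exp.2 h
  exact Real.log_le_log (by positivity) (by linarith)

noncomputable def Vf (y : ℝ) : ℝ := Real.log (1 + max y 0)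

lemma Vf_meas : Measurable Vf := by unfold Vf; fun_prop

lemma Vf_nn (y : ℝ) : 0 ≤ Vf y := Real.log_nonneg (by have := le_max_right y 0; linarith)

lemma Vf_top (A : ℝ) : ∃ R : ℝ, ∀ y, R < y → A ≤ Vf y := by
  refine ⟨Real.exp A, fun y hy => ?_⟩
  unfold Vf
  have := Real.exp_pos A
  rw [Real.le_log_iff_exp_le (by have := le_max_right y 0; linarith)]
  have := le_max_left y 0
  linarith

lemma Vf_lip (y e : ℝ) (he : 0 ≤ e) : Vf (y + e) ≤ Vf y + e := by
  unfold Vf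
  have h0 := le_max_right y 0
  have h1 : max (y + e) 0 ≤ max y 0 + e := by
    apply max_le
    · have := le_max_left y 0; linarith
    · linarith
  have hp : 0 < 1 + max y 0 := by linarith
  calc Real.log (1 + max (y+e) 0) ≤ Real.log ((1 + max y 0) * (1 + e)) := by
        apply Real.log_le_log
        · have := le_max_right (y+e) 0; linarith
        · nlinarith
    _ = Real.log (1 + max y 0) + Real.log (1 + e) := Real.log_mul hp.ne' (by linarith)
    _ ≤ _ := by
      have := Real.log_le_sub_one_of_pos (show 0 < 1 + e by linarith)
      linarith

lemma Vf_mono : Monotone Vf := by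
  intro x y h
  unfold Vf
  have h0 := le_max_right x 0
  have : max x 0 ≤ max y 0 := max_le_max_right 0 h
  exact Real.log_le_log (by linarith) (by linarith)

lemma log_quad (t : ℝ) (h1 : -1 < t) (h2 : t ≤ 1) : Real.log (1 + t) ≤ t - t ^ 2 / 6 := by
  have hp : 0 < 1 + t := by linarith
  set r := Real.sqrt (1 + t) with hr
  have hr0 : 0 < r := Real.sqrt_pos.2 hp
  have hr2 : r ^ 2 = 1 + t := Real.sq_sqrt hp.le
  have h3 : Real.log (1 + t) ≤ 2 * (r - 1) := by
    rw [← hr2, Real.log_pow]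
    have := Real.log_le_sub_one_of_pos hr0
    push_cast
    linarith
  have ht : t = r ^ 2 - 1 := by linarith
  have hr15 : r ≤ 1.42 := by nlinarith
  have h4 : (r + 1) ^ 2 ≤ 6 := by nlinarith
  have h5 : t ^ 2 = (r - 1) ^ 2 * (r + 1) ^ 2 := by rw [ht]; ring
  have h6 : (r - 1) ^ 2 * (r + 1) ^ 2 ≤ (r - 1) ^ 2 * 6 :=
    mul_le_mul_of_nonneg_left h4 (sq_nonneg _)
  rw [h5]
  nlinarith

lemma Vf_point (a b y z : ℝ) (hb : b < 0) (hy : 0 < y) (hya : -a ≤ y) :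
    Vf (z + hY y) ≤ Vf y + Real.exp (-y) + (1 + y)⁻¹ * z
      - b ^ 2 / (6 * (1 + y) ^ 2) * (Icc a b).indicator (fun _ => (1:ℝ)) z + (y ^ 3)⁻¹ * z ^ 4 := by
  have h1 : Vf (z + hY y) ≤ Vf (y + z) + Real.exp (-y) := by
    refine le_trans (Vf_mono ?_) (Vf_lip (y + z) _ (Real.exp_pos _).le)
    have := hY_le y
    linarith
  have hy1 : 0 < 1 + y := by linarith
  have hz4 : 0 ≤ (y ^ 3)⁻¹ * z ^ 4 := by positivity
  have hVy : Vf y = Real.log (1 + y) := by unfold Vf; rw [max_eq_left hy.le]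
  suffices Vf (y + z) ≤ Vf y + (1 + y)⁻¹ * z
      - b ^ 2 / (6 * (1 + y) ^ 2) * (Icc a b).indicator (fun _ => (1:ℝ)) z + (y ^ 3)⁻¹ * z ^ 4 by
    linarith
  by_cases hneg : y + z < 0
  · have hz : z ∉ Icc a b := fun h => by have := h.1; linarith
    rw [indicator_of_notMem hz]
    have : Vf (y + z) = 0 := by unfold Vf; rw [max_eq_right hneg.le]; simp
    rw [this]
    have h2 := Vf_nn y
    have h3 : -z ≤ (y ^ 3)⁻¹ * z ^ 4 := by
      rw [inv_mul_eq_div, le_div_iff₀ (by positivity)]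
      have : y ^ 3 ≤ (-z) ^ 3 := pow_le_pow_left₀ hy.le (by linarith) 3
      have hz0 : 0 ≤ -z := by linarith
      calc -z * y ^ 3 ≤ -z * (-z) ^ 3 := mul_le_mul_of_nonneg_left this hz0
        _ = z ^ 4 := by ring
    have h4 : (1 + y)⁻¹ * (-z) ≤ -z :=
      mul_le_of_le_one_left (by linarith) (inv_le_one_of_one_le₀ (by linarith))
    linarith
  push Not at hneg
  have e1 : Vf (y + z) = Vf y + Real.log (1 + (1 + y)⁻¹ * z) := by
    rw [hVy]
    unfold Vf
    rw [max_eq_left hneg, ← Real.log_mul hy1.ne']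
    · congr 1
      field_simp
      ring
    · have : 1 + (1+y)⁻¹ * z = (1 + y + z) / (1 + y) := by field_simp
      rw [this]
      exact (div_pos (by linarith) hy1).ne'
  rw [e1]
  have hpos : 0 < 1 + (1 + y)⁻¹ * z := by
    have : 1 + (1+y)⁻¹ * z = (1 + y + z) / (1 + y) := by field_simp
    rw [this]
    exact div_pos (by linarith) hy1
  by_cases hz : z ∈ Icc a b
  · rw [indicator_of_mem hz, mul_one]
    have h2 := log_quad ((1 + y)⁻¹ * z) (by linarith) (by
      have : (1+y)⁻¹ * z ≤ 0 := mul_nonpos_of_nonneg_of_nonpos (by positivity) (by linarith [hz.2])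
      linarith)
    have h3 : b ^ 2 / (6 * (1 + y) ^ 2) ≤ ((1 + y)⁻¹ * z) ^ 2 / 6 := by
      have : ((1 + y)⁻¹ * z) ^ 2 / 6 = z ^ 2 / (6 * (1 + y) ^ 2) := by field_simp
      rw [this]
      gcongr 1
      nlinarith [hz.2]
    linarith
  · rw [indicator_of_notMem hz]
    have := Real.log_le_sub_one_of_pos hpos
    linarith

lemma drift (μ : Measure ℝ) [IsProbabilityMeasure μ] (hi : Integrable (fun z => z) μ)
    (h0 : ∫ z, z ∂μ = 0) (hi4 : Integrable (fun z => z ^ 4) μ) (a b : ℝ) (hb : b < 0)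
    (hI : 0 < μ (Icc a b)) :
    ∃ K c : ℝ, 0 < c ∧ 0 < K ∧ ∀ y, K < y →
      ∫⁻ z, ENNReal.ofReal (Vf (z + hY y)) ∂μ + ENNReal.ofReal (c / (1 + y) ^ 2)
        ≤ ENNReal.ofReal (Vf y) := by
  set m4 := ∫ z, z ^ 4 ∂μ with hm4
  have hm40 : 0 ≤ m4 := integral_nonneg fun z => by positivity
  set s := b ^ 2 * μ.real (Icc a b) with hs
  have hs0 : 0 < s := by
    have : 0 < μ.real (Icc a b) := ENNReal.toReal_pos hI.ne' (measure_ne_top _ _)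
    have hb2 : 0 < b ^ 2 := by nlinarith
    exact mul_pos hb2 this
  refine ⟨max (max 1 (-a)) (48 * (6 + m4) / s), s / 12, by positivity,
    lt_of_lt_of_le one_pos ((le_max_left _ _).trans (le_max_left _ _)), fun y hy => ?_⟩
  have hy1 : 1 < y := lt_of_le_of_lt ((le_max_left _ _).trans (le_max_left _ _)) hy
  have hya : -a < y := lt_of_le_of_lt ((le_max_right _ _).trans (le_max_left _ _)) hy
  have hys : 48 * (6 + m4) / s < y := lt_of_le_of_lt (le_max_right _ _) hy
  have hind : Integrable ((Icc a b).indicator (fun _ => (1:ℝ))) μ :=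
    (integrable_const 1).indicator measurableSet_Icc
  have hR : Integrable (fun z => Vf y + Real.exp (-y) + (1 + y)⁻¹ * z
      - b ^ 2 / (6 * (1 + y) ^ 2) * (Icc a b).indicator (fun _ => (1:ℝ)) z + (y ^ 3)⁻¹ * z ^ 4) μ :=
    (((integrable_const _).add (hi.const_mul _)).sub (hind.const_mul _)).add (hi4.const_mul _)
  have hpt := fun z => Vf_point a b y z hb (by linarith) hya.le
  have hVi : Integrable (fun z => Vf (z + hY y)) μ := by
    refine hR.mono' (Vf_meas.comp (measurable_id.add_const _)).aestronglyMeasurable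
      (ae_of_all _ fun z => ?_)
    rw [Real.norm_of_nonneg (Vf_nn _)]
    exact hpt z
  have hint : ∫ z, Vf (z + hY y) ∂μ ≤ Vf y + Real.exp (-y) - s / (6 * (1 + y) ^ 2) + m4 / y ^ 3 := by
    refine (integral_mono hVi hR hpt).trans (le_of_eq ?_)
    have i1 : Integrable (fun z : ℝ => Vf y + Real.exp (-y)) μ := integrable_const _
    have i2 : Integrable (fun z : ℝ => (1 + y)⁻¹ * z) μ := hi.const_mul _
    have i3 : Integrable (fun z : ℝ => b ^ 2 / (6 * (1 + y) ^ 2) *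
      (Icc a b).indicator (fun _ => (1:ℝ)) z) μ := hind.const_mul _
    have i4 : Integrable (fun z : ℝ => (y ^ 3)⁻¹ * z ^ 4) μ := hi4.const_mul _
    have i12 : Integrable (fun z : ℝ => Vf y + Real.exp (-y) + (1 + y)⁻¹ * z) μ := i1.add i2
    have i123 : Integrable (fun z : ℝ => Vf y + Real.exp (-y) + (1 + y)⁻¹ * z
      - b ^ 2 / (6 * (1 + y) ^ 2) * (Icc a b).indicator (fun _ => (1:ℝ)) z) μ := i12.sub i3
    rw [integral_add i123 i4, integral_sub i12 i3, integral_add i1 i2, integral_const_mul,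
      integral_const_mul, integral_const_mul, h0, integral_indicator_const _ measurableSet_Icc]
    simp only [integral_const, probReal_univ, smul_eq_mul, one_mul, mul_one, mul_zero, add_zero]
    rw [hs, ← hm4]
    ring
  have hexp : Real.exp (-y) ≤ 6 / y ^ 3 := by
    have h := Real.pow_div_factorial_le_exp y (by linarith) 3
    rw [Real.exp_neg, le_div_iff₀ (by positivity), inv_mul_le_iff₀ (Real.exp_pos y)]
    norm_num [Nat.factorial] at h
    linarith
  have hfin : 6 / y ^ 3 + m4 / y ^ 3 ≤ s / 12 / (1 + y) ^ 2 := by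
    rw [← add_div, div_le_div_iff₀ (by positivity) (by positivity)]
    rw [div_lt_iff₀ hs0] at hys
    have h4 : (1 + y) ^ 2 ≤ 4 * y ^ 2 := by nlinarith
    calc (6 + m4) * (1 + y) ^ 2 ≤ (6 + m4) * (4 * y ^ 2) := by gcongr
      _ = 48 * (6 + m4) * y ^ 2 / 12 := by ring
      _ ≤ (y * s) * y ^ 2 / 12 := by gcongr
      _ = _ := by ring
  have htot : ∫ z, Vf (z + hY y) ∂μ + s / 12 / (1 + y) ^ 2 ≤ Vf y := by
    have : s / (6 * (1 + y) ^ 2) = 2 * (s / 12 / (1 + y) ^ 2) := by field_simp; norm_num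
    linarith
  rw [← ofReal_integral_eq_lintegral_ofReal hVi (ae_of_all _ fun z => Vf_nn _),
    ← ENNReal.ofReal_add (integral_nonneg fun z => Vf_nn _) (by positivity)]
  exact ENNReal.ofReal_le_ofReal htot

noncomputable def clampf (N : ℕ) (y : ℝ) : ℝ := max (-N) (min y N)

lemma infmass (μ : Measure ℝ) [IsProbabilityMeasure μ] (hi : Integrable (fun z => z) μ)
    (h0 : ∫ z, z ∂μ = 0) (ν : Measure ℝ) [IsFiniteMeasure ν]
    (hinv : ∀ g : ℝ → ℝ≥0∞, Measurable g → ∫⁻ z, g z ∂ν = ∫⁻ y, ∫⁻ z, g (z + hY y) ∂μ ∂ν) :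
    ν = 0 := by
  have hhm : Measurable hY := hY_cont.measurable
  have hcm : ∀ N, Measurable (clampf N) := fun N => by unfold clampf; fun_prop
  have hcm' : ∀ N, Monotone (clampf N) := fun N x y h => by unfold clampf; gcongr
  have hclip : ∀ N y z, clampf N y ≤ clampf N (y + z) + |z| := by
    intro N y z
    unfold clampf
    have h1 := neg_abs_le z
    have h2 := abs_nonneg z
    have h3 := le_max_left (-(N:ℝ)) (min (y+z) N)
    have h4 := le_max_right (-(N:ℝ)) (min (y+z) N)
    have hm : min y N ≤ min (y+z) N + |z| := by
      rw [← min_add_add_right]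
      exact min_le_min (by linarith) (by linarith)
    apply max_le <;> linarith
  have hlb : ∀ N y, 0 ≤ clampf N y + N := fun N y => by
    have := le_max_left (-(N:ℝ)) (min y N); unfold clampf; linarith
  have hub : ∀ N y, clampf N y + N ≤ 2 * N := fun N y => by
    have : clampf N y ≤ N := max_le (by
      have : (0:ℝ) ≤ N := Nat.cast_nonneg N
      linarith) (min_le_right _ _)
    linarith
  let A : ℕ → ℝ × ℝ → ℝ := fun N q => clampf N (q.2 + hY q.1) + |q.2| - clampf N q.1
  have hA0 : ∀ N q, 0 ≤ A N q := by
    intro N q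
    have h1 := hclip N q.1 q.2
    have h2 := hcm' N (show q.1 + q.2 ≤ q.2 + hY q.1 by have := hY_gt q.1; linarith)
    simp only [A]; linarith
  have hAm : ∀ N, Measurable (A N) := fun N => by
    simp only [A]
    exact (((hcm N).comp (measurable_snd.add (hhm.comp measurable_fst))).add
      (measurable_snd.abs)).sub ((hcm N).comp measurable_fst)
  set E := ∫⁻ z, ENNReal.ofReal |z| ∂μ with hE
  have hEt : E ≠ ⊤ := by
    rw [hE, ← ofReal_integral_eq_lintegral_ofReal hi.abs (ae_of_all _ fun z => abs_nonneg z)]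
    exact ENNReal.ofReal_ne_top
  have hint : ∀ N, ∫⁻ y, ∫⁻ z, ENNReal.ofReal (A N (y, z)) ∂μ ∂ν = E * ν univ := by
    intro N
    have hF : ∫⁻ y, ENNReal.ofReal (clampf N y + N) ∂ν ≠ ⊤ := by
      have : ∫⁻ y, ENNReal.ofReal (clampf N y + N) ∂ν ≤ ∫⁻ y, ENNReal.ofReal (2 * N) ∂ν :=
        lintegral_mono fun y => ENNReal.ofReal_le_ofReal (hub N y)
      refine ne_top_of_le_ne_top ?_ this
      rw [lintegral_const]
      exact ENNReal.mul_ne_top ENNReal.ofReal_ne_top (measure_ne_top _ _)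
    have hcN : Measurable fun y => ENNReal.ofReal (clampf N y + N) :=
      ((hcm N).add_const _).ennreal_ofReal
    have e : ∫⁻ y, ∫⁻ z, ENNReal.ofReal (A N (y, z)) ∂μ ∂ν + ∫⁻ y, ENNReal.ofReal (clampf N y + N) ∂ν
        = E * ν univ + ∫⁻ y, ENNReal.ofReal (clampf N y + N) ∂ν := by
      conv_rhs => rw [hinv _ hcN, ← lintegral_const, ← lintegral_add_left measurable_const]
      rw [← lintegral_add_right _ hcN]
      refine lintegral_congr fun y => ?_
      have : ENNReal.ofReal (clampf N y + N) = ∫⁻ z, ENNReal.ofReal (clampf N y + N) ∂μ := by simp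
      rw [this, hE, ← lintegral_add_right _ measurable_const,
        ← lintegral_add_left (show Measurable fun z : ℝ => ENNReal.ofReal |z| by fun_prop)]
      refine lintegral_congr fun z => ?_
      rw [← ENNReal.ofReal_add (hA0 N _) (hlb N y), ← ENNReal.ofReal_add (abs_nonneg _) (hlb N _)]
      congr 1
      simp only [A]; ring
    exact (ENNReal.add_left_inj hF).1 e
  have hlimpt : ∀ y z, Tendsto (fun N => ENNReal.ofReal (A N (y, z))) atTop
      (nhds (ENNReal.ofReal (z + |z| + (hY y - y)))) := by
    intro y z
    refine ENNReal.tendsto_ofReal ?_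
    have hc : ∀ x, ∀ᶠ N : ℕ in atTop, clampf N x = x := by
      intro x
      obtain ⟨n, hn⟩ := exists_nat_ge |x|
      filter_upwards [eventually_ge_atTop n] with N hN
      have : (n:ℝ) ≤ N := by exact_mod_cast hN
      have h1 := abs_le.1 (hn.trans this)
      unfold clampf
      rw [min_eq_left h1.2, max_eq_right h1.1]
    refine tendsto_const_nhds.congr' ?_
    filter_upwards [hc y, hc (z + hY y)] with N h1 h2
    simp only [A]
    rw [h1, h2]; ring
  have hfatou : ∫⁻ y, ∫⁻ z, ENNReal.ofReal (z + |z| + (hY y - y)) ∂μ ∂ν ≤ E * ν univ := by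
    calc _ = ∫⁻ y, ∫⁻ z, liminf (fun N => ENNReal.ofReal (A N (y, z))) atTop ∂μ ∂ν :=
          lintegral_congr fun y => lintegral_congr fun z => ((hlimpt y z).liminf_eq).symm
      _ ≤ ∫⁻ y, liminf (fun N => ∫⁻ z, ENNReal.ofReal (A N (y, z)) ∂μ) atTop ∂ν :=
          lintegral_mono fun y => lintegral_liminf_le fun N =>
            ((hAm N).comp measurable_prodMk_left).ennreal_ofReal
      _ ≤ liminf (fun N => ∫⁻ y, ∫⁻ z, ENNReal.ofReal (A N (y, z)) ∂μ ∂ν) atTop :=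
          lintegral_liminf_le fun N => (hAm N).ennreal_ofReal.lintegral_prod_right'
      _ = E * ν univ := by simp_rw [hint]; simp
  have hin : ∀ y, ∫⁻ z, ENNReal.ofReal (z + |z| + (hY y - y)) ∂μ = E + ENNReal.ofReal (hY y - y) := by
    intro y
    have hg := hY_gt y
    have i1 : Integrable (fun z : ℝ => z + |z|) μ := hi.add hi.abs
    have i2 : Integrable (fun z : ℝ => z + |z| + (hY y - y)) μ := i1.add (integrable_const _)
    rw [← ofReal_integral_eq_lintegral_ofReal i2
      (ae_of_all _ fun z => by
        have := neg_abs_le z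
        simp only [Pi.zero_apply]
        linarith)]
    rw [integral_add i1 (integrable_const _), integral_add hi hi.abs, h0,
      hE, ← ofReal_integral_eq_lintegral_ofReal hi.abs (ae_of_all _ fun z => abs_nonneg z),
      ← ENNReal.ofReal_add (integral_nonneg fun z => abs_nonneg z) (by linarith)]
    simp
  simp_rw [hin] at hfatou
  rw [lintegral_add_left measurable_const, lintegral_const] at hfatou
  have hz : ∫⁻ y, ENNReal.ofReal (hY y - y) ∂ν = 0 := by
    have hne : E * ν univ ≠ ⊤ := ENNReal.mul_ne_top hEt (measure_ne_top _ _)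
    have := (ENNReal.add_le_add_iff_left hne).1 (hfatou.trans (add_zero _).symm.le)
    simpa using this
  rw [lintegral_eq_zero_iff (show Measurable fun y => ENNReal.ofReal (hY y - y) from
    (hhm.sub measurable_id).ennreal_ofReal)] at hz
  rw [← ae_eq_bot, ← Filter.empty_mem_iff_bot]
  filter_upwards [hz] with y hy
  have := hY_gt y
  simp at hy
  linarith

lemma access (μ : Measure ℝ) (P : Kernel ℝ ℝ)
    (hPμ : ∀ f : ℝ → ℝ≥0∞, Measurable f → ∀ y, kop P f y = ∫⁻ z, f (z + hY y) ∂μ)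
    (z0 ys r : ℝ) (hz0 : z0 < 0) (hys : ys = z0 + hY ys) (hr : 0 < r)
    (hpos : ∀ η, 0 < η → 0 < μ (Icc (z0 - η) (z0 + η))) (x : ℝ) :
    ∃ n : ℕ, ∃ p : ℝ≥0∞, 0 < p ∧ ∀ y ≤ x,
      p ≤ (kop P)^[n] ((Icc (ys - r) (ys + r)).indicator (fun _ => 1)) y := by
  set K := max x (max ys (-Real.log (-z0 / 2))) with hK
  have hKx : x ≤ K := le_max_left _ _
  have hKy : ys ≤ K := (le_max_left _ _).trans (le_max_right _ _)
  have hKz : Real.exp (-K) ≤ -z0 / 2 := by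
    have h1 : -Real.log (-z0 / 2) ≤ K := (le_max_right _ _).trans (le_max_right _ _)
    calc Real.exp (-K) ≤ Real.exp (Real.log (-z0 / 2)) := Real.exp_le_exp.2 (by linarith)
      _ = _ := Real.exp_log (by linarith)
  set l := Real.exp K / (1 + Real.exp K) with hl
  have hl0 : 0 ≤ l := by positivity
  have hl1 : l < 1 := by
    rw [hl, div_lt_one (by positivity)]; linarith
  set η := min (-z0 / 2) ((1 - l) * r / 2) with hη
  have hη1 : η ≤ -z0 / 2 := min_le_left _ _
  have hη2 : η ≤ (1 - l) * r / 2 := min_le_right _ _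
  have hη0 : 0 < η := lt_min (by linarith) (by
    have := mul_pos (sub_pos.2 hl1) hr
    linarith)
  set I := Icc (z0 - η) (z0 + η) with hI
  set p0 := μ I with hp0
  have hp0pos : 0 < p0 := hpos η hη0
  have hstay : ∀ y ≤ K, ∀ z ∈ I, z + hY y ≤ K := by
    intro y hy z hz
    have h1 := hY_mono hy
    have h2 := hY_le K
    have h3 := hz.2
    linarith
  set R0 := (K - ys) + |z0 - η - ys| with hR0
  have hR00 : 0 ≤ R0 := by
    have := abs_nonneg (z0 - η - ys)
    linarith
  let S : ℕ → Set ℝ := fun k => {y | y ≤ K ∧ |y - ys| ≤ r / 2 + l ^ k * R0}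
  have hS0 : ∀ y ≤ K, ∀ z ∈ I, z + hY y ∈ S 0 := by
    intro y hy z hz
    have h1 := hstay y hy z hz
    refine ⟨h1, ?_⟩
    have h2 := hY_pos y
    have h3 := hz.1
    have h4 := neg_abs_le (z0 - η - ys)
    have h5 := abs_nonneg (z0 - η - ys)
    rw [abs_le]
    constructor <;> simp only [pow_zero, one_mul] <;> linarith
  have hSk : ∀ k, ∀ y ∈ S k, ∀ z ∈ I, z + hY y ∈ S (k+1) := by
    intro k y hy z hz
    refine ⟨hstay y hy.1 z hz, ?_⟩
    have e : z + hY y - ys = (z - z0) + (hY y - hY ys) := by linarith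
    have h1 : |z - z0| ≤ η := by rw [abs_le]; constructor <;> linarith [hz.1, hz.2]
    have h2 := hY_lip K y ys hy.1 hKy
    have h3 := mul_le_mul_of_nonneg_left hy.2 hl0
    rw [e]
    refine (abs_add_le _ _).trans ?_
    calc _ ≤ (1 - l) * r / 2 + l * (r / 2 + l ^ k * R0) := by linarith
      _ = _ := by ring
  have hone : ∀ f : ℝ → ℝ≥0∞, Measurable f → ∀ (T : Set ℝ) (q : ℝ≥0∞) (y : ℝ),
      (∀ z ∈ I, z + hY y ∈ T) → (∀ t ∈ T, q ≤ f t) → q * p0 ≤ kop P f y := by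
    intro f hf T q y hT hq
    rw [hPμ f hf y, hp0, ← setLIntegral_const]
    refine le_trans ?_ (setLIntegral_le_lintegral I _)
    exact setLIntegral_mono' measurableSet_Icc fun z hz => hq _ (hT z hz)
  obtain ⟨N, hN⟩ : ∃ N : ℕ, l ^ N * R0 ≤ r / 2 := by
    have : Tendsto (fun n : ℕ => l ^ n * R0) atTop (nhds (0 * R0)) :=
      (tendsto_pow_atTop_nhds_zero_of_lt_one hl0 hl1).mul_const _
    rw [zero_mul] at this
    exact (this.eventually_le_const (by linarith : 0 < r / 2)).exists
  set C := Icc (ys - r) (ys + r) with hC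
  have hIC : Measurable (C.indicator (fun _ => (1:ℝ≥0∞))) := measurable_const.indicator measurableSet_Icc
  have hind : ∀ n k, k + n = N → ∀ y ∈ S k, p0 ^ n ≤ (kop P)^[n] (C.indicator (fun _ => 1)) y := by
    intro n
    induction n with
    | zero =>
      intro k hk y hy
      have hkN : k = N := by omega
      subst hkN
      have : y ∈ C := by
        have := abs_le.1 hy.2
        constructor <;> linarith
      simp [indicator_of_mem this]
    | succ n ih =>
      intro k hk y hy
      rw [Function.iterate_succ_apply', pow_succ]
      exact hone _ (kop_iter_meas P hIC n) (S (k+1)) _ y (hSk k y hy) (ih (k+1) (by omega))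
  refine ⟨N + 1, p0 ^ (N + 1), pos_iff_ne_zero.2 (pow_ne_zero _ hp0pos.ne'), fun y hy => ?_⟩
  rw [Function.iterate_succ_apply', pow_succ]
  exact hone _ (kop_iter_meas P hIC N) (S 0) _ y (hS0 y (hy.trans hKx)) (hind N 0 (by omega))

lemma mu_facts (ζ : ℝ → ℝ) (hζmeas : Measurable ζ) (hζnn : ∀ x, 0 ≤ ζ x)
    (hζprob : ∫ x, ζ x = 1) (hmean : ∫ x, x * ζ x = 0) (δ : ℝ) (hδ : 0 < δ) (Cδ : ℝ)
    (htail : ∀ x : ℝ, 0 ≤ x → ∫ y in {y : ℝ | x < |y|}, ζ y ≤ Cδ * Real.exp (-δ * x))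
    (μ : Measure ℝ) (hμ : μ = volume.withDensity (fun x => ENNReal.ofReal (ζ x))) :
    IsProbabilityMeasure μ ∧ Integrable (fun z => z) μ ∧ ∫ z, z ∂μ = 0 ∧
      Integrable (fun z => z ^ 4) μ := by
  have hζi : Integrable ζ := integrable_of_integral_eq_one hζprob
  have hprob : IsProbabilityMeasure μ := by
    constructor
    rw [hμ, withDensity_apply _ MeasurableSet.univ, Measure.restrict_univ,
      ← ofReal_integral_eq_lintegral_ofReal hζi (ae_of_all _ hζnn), hζprob]
    simp
  have htl : ∀ x, 0 ≤ x → μ {y | x < |y|} ≤ ENNReal.ofReal (Cδ * Real.exp (-δ * x)) := by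
    intro x hx
    have hms : MeasurableSet {y : ℝ | x < |y|} := measurableSet_lt measurable_const measurable_id.abs
    rw [hμ, withDensity_apply _ hms,
      ← ofReal_integral_eq_lintegral_ofReal hζi.integrableOn (ae_of_all _ hζnn)]
    exact ENNReal.ofReal_le_ofReal (htail x hx)
  have hi4 : Integrable (fun z => z ^ 4) μ := by
    refine ⟨(by fun_prop), ?_⟩
    have e : ∫⁻ z, ‖z ^ 4‖ₑ ∂μ = ∫⁻ z, ENNReal.ofReal (|z| ^ (4:ℝ)) ∂μ := by
      refine lintegral_congr fun z => ?_
      rw [Real.enorm_eq_ofReal_abs, abs_pow]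
      norm_cast
    rw [HasFiniteIntegral, e, lintegral_rpow_eq_lintegral_meas_lt_mul μ (ae_of_all _ fun z => abs_nonneg z)
      measurable_id.abs.aemeasurable (by norm_num : (0:ℝ) < 4)]
    refine ENNReal.mul_lt_top ENNReal.ofReal_lt_top ?_
    have hint := (integrableOn_rpow_mul_exp_neg_mul_rpow (p := 1) (s := 3) (b := δ) (by norm_num)
      one_pos hδ).const_mul Cδ
    have hfin := hint.lintegral_lt_top
    refine lt_of_le_of_lt ?_ hfin
    refine setLIntegral_mono' measurableSet_Ioi fun t ht => ?_
    have ht0 : (0:ℝ) < t := ht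
    calc _ ≤ ENNReal.ofReal (Cδ * Real.exp (-δ * t)) * ENNReal.ofReal (t ^ ((4:ℝ) - 1)) := by
          gcongr; exact htl t ht0.le
      _ = _ := by
        rw [← ENNReal.ofReal_mul' (by positivity)]
        congr 1
        rw [Real.rpow_one]
        norm_num
        ring
  have hi : Integrable (fun z => z) μ := by
    refine (hi4.add (integrable_const (1:ℝ))).mono' (by fun_prop) (ae_of_all _ fun z => ?_)
    simp only [Pi.add_apply, Real.norm_eq_abs]
    rw [abs_le]
    constructor <;> nlinarith [sq_nonneg (z^2 - 1), sq_nonneg (z - 1), sq_nonneg (z+1), sq_nonneg (z^2)]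
  refine ⟨hprob, hi, ?_, hi4⟩
  rw [hμ, integral_withDensity_eq_integral_toReal_smul hζmeas.ennreal_ofReal
    (ae_of_all _ fun x => ENNReal.ofReal_lt_top)]
  rw [← hmean]
  refine integral_congr_ae (ae_of_all _ fun x => ?_)
  simp [ENNReal.toReal_ofReal (hζnn x), mul_comm]

lemma exists_neg (ζ : ℝ → ℝ) (hζnn : ∀ x, 0 ≤ ζ x)
    (hζprob : ∫ x, ζ x = 1) (hmean : ∫ x, x * ζ x = 0) (hi : Integrable (fun x => x * ζ x)) :
    ∃ z0, z0 < 0 ∧ 0 < ζ z0 := by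
  by_contra! h
  have h0 : ∀ x < 0, ζ x = 0 := fun x hx => le_antisymm (h x hx) (hζnn x)
  have hnn : 0 ≤ fun x => x * ζ x := by
    intro x
    rcases lt_or_ge x 0 with hx | hx
    · simp [h0 x hx]
    · exact mul_nonneg hx (hζnn x)
  have hae := (integral_eq_zero_iff_of_nonneg hnn hi).1 hmean
  have hz : ζ =ᵐ[volume] 0 := by
    have hne : ∀ᵐ x : ℝ, x ≠ 0 := by
      rw [ae_iff]; simp
    filter_upwards [hae, hne] with x hx hx0
    simpa [hx0] using hx
  rw [integral_congr_ae hz] at hζprob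
  simp at hζprob

/-- Proposition: the chain Y has a unique (up to constant) σ-finite invariant measure;
it is finite on left half-lines but has infinite total mass. -/
theorem stmt5
    (ζ : ℝ → ℝ) (hζmeas : Measurable ζ) (hζnn : ∀ x, 0 ≤ ζ x)
    (hζprob : ∫ x, ζ x = 1)
    (hmean : ∫ x, x * ζ x = 0)
    (δ : ℝ) (hδ : 0 < δ) (Cδ : ℝ)
    (htail : ∀ x : ℝ, 0 ≤ x → ∫ y in {y : ℝ | x < |y|}, ζ y ≤ Cδ * Real.exp (-δ * x))
    (θ : ℝ) (hθ0 : 0 < θ) (hθ1 : θ ≤ 1) (Cθ : ℝ)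
    (hHolder : ∀ x y : ℝ, |ζ x - ζ y| ≤ Cθ * |x - y| ^ θ)
 :
    ∃ ν : Measure ℝ, ν ≠ 0 ∧ SigmaFinite ν ∧ IsInvariantY ζ ν ∧
      (∀ x : ℝ, ν (Set.Iic x) < ⊤) ∧ ν Set.univ = ⊤ ∧
      ∀ ν' : Measure ℝ, ν' ≠ 0 → SigmaFinite ν' → IsInvariantY ζ ν' →
        ∃ c : ℝ≥0∞, 0 < c ∧ c < ⊤ ∧ ν' = c • ν := by
  obtain ⟨μ, hμ⟩ : ∃ μ : Measure ℝ, μ = volume.withDensity (fun x => ENNReal.ofReal (ζ x)) := ⟨_, rfl⟩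
  obtain ⟨hprob, hi, h0, hi4⟩ := mu_facts ζ hζmeas hζnn hζprob hmean δ hδ Cδ htail μ hμ
  have hhm : Measurable hY := hY_cont.measurable
  -- continuity
  have hcont : Continuous ζ := by
    rw [continuous_iff_continuousAt]
    intro x
    rw [ContinuousAt, tendsto_iff_dist_tendsto_zero]
    have h1 : Tendsto (fun y => Cθ * |y - x| ^ θ) (nhds x) (nhds 0) := by
      have hc : Continuous (fun y => Cθ * |y - x| ^ θ) :=
        continuous_const.mul (Continuous.rpow_const (by fun_prop) fun _ => Or.inr hθ0.le)
      have := hc.tendsto x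
      simpa [Real.zero_rpow hθ0.ne'] using this
    exact squeeze_zero (fun y => dist_nonneg) (fun y => by rw [Real.dist_eq]; exact hHolder y x) h1
  have hiζ : Integrable (fun x => x * ζ x) := by
    have := (integrable_withDensity_iff_integrable_smul' (μ := volume) (g := fun z : ℝ => z)
      hζmeas.ennreal_ofReal (ae_of_all _ fun x => ENNReal.ofReal_lt_top)).1 (hμ ▸ hi)
    refine this.congr (ae_of_all _ fun x => ?_)
    simp [ENNReal.toReal_ofReal (hζnn x), mul_comm]
  obtain ⟨z0, hz0, hζz0⟩ := exists_neg ζ hζnn hζprob hmean hiζ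
  obtain ⟨κ, hκ⟩ : ∃ κ, κ = ζ z0 / 2 := ⟨_, rfl⟩
  have hκ0 : 0 < κ := by linarith
  obtain ⟨η, hη, hηκ⟩ : ∃ η > 0, ∀ z, |z - z0| ≤ η → κ ≤ ζ z := by
    have h1 : ∀ᶠ z in nhds z0, κ < ζ z := hcont.continuousAt.eventually_const_lt (by linarith)
    obtain ⟨e, he, hball⟩ := Metric.eventually_nhds_iff.1 h1
    exact ⟨e / 2, by linarith, fun z hz => (hball (by rw [Real.dist_eq]; linarith)).le⟩
  have hpos : ∀ e, 0 < e → 0 < μ (Icc (z0 - e) (z0 + e)) := by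
    intro e he
    have hm : 0 < min e η := lt_min he hη
    have hsub : Icc (z0 - min e η) (z0 + min e η) ⊆ Icc (z0 - e) (z0 + e) := by
      have := min_le_left e η
      exact Icc_subset_Icc (by linarith) (by linarith)
    refine lt_of_lt_of_le ?_ (measure_mono hsub)
    rw [hμ, withDensity_apply _ measurableSet_Icc]
    have : ∫⁻ z in Icc (z0 - min e η) (z0 + min e η), ENNReal.ofReal κ
        ≤ ∫⁻ z in Icc (z0 - min e η) (z0 + min e η), ENNReal.ofReal (ζ z) := by
      refine setLIntegral_mono' measurableSet_Icc fun z hz => ENNReal.ofReal_le_ofReal (hηκ z ?_)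
      have := min_le_right e η
      rw [abs_le]; constructor <;> linarith [hz.1, hz.2]
    refine lt_of_lt_of_le ?_ this
    rw [setLIntegral_const, Real.volume_Icc]
    refine ENNReal.mul_pos ?_ ?_
    · simpa using hκ0
    · rw [Ne, ENNReal.ofReal_eq_zero, not_le]
      linarith
  -- fixed point
  obtain ⟨ys, hys⟩ : ∃ ys, ys = z0 + hY ys := by
    have ha1 : Real.exp z0 < 1 := by rw [← Real.exp_zero]; exact Real.exp_lt_exp.2 hz0
    have ha0 := Real.exp_pos z0
    have hq : 0 < Real.exp z0 / (1 - Real.exp z0) := div_pos ha0 (by linarith)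
    refine ⟨Real.log (Real.exp z0 / (1 - Real.exp z0)), ?_⟩
    rw [hY_eq, Real.exp_log hq]
    have e : 1 + Real.exp z0 / (1 - Real.exp z0) = (1 - Real.exp z0)⁻¹ := by
      have : 1 - Real.exp z0 ≠ 0 := by linarith
      field_simp
      ring
    rw [e, Real.log_inv, Real.log_div ha0.ne' (by linarith), Real.log_exp]
    ring
  obtain ⟨r, hr⟩ : ∃ r, r = η / 2 := ⟨_, rfl⟩
  have hr0 : 0 < r := by linarith
  obtain ⟨C, hC⟩ : ∃ C, C = Icc (ys - r) (ys + r) := ⟨_, rfl⟩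
  have hCm : MeasurableSet C := hC ▸ measurableSet_Icc
  have hsmall : ∀ y ∈ C, ∀ x ∈ C, κ ≤ ζ (x - hY y) := by
    intro y hy x hx
    rw [hC] at hy hx
    apply hηκ
    have e : x - hY y - z0 = (x - ys) - (hY y - hY ys) := by linarith
    rw [e]
    have h1 := hY_lip1 y ys
    have h2 : |x - ys| ≤ r := by rw [abs_le]; constructor <;> linarith [hx.1, hx.2]
    have h3 : |y - ys| ≤ r := by rw [abs_le]; constructor <;> linarith [hy.1, hy.2]
    have := abs_sub (x - ys) (hY y - hY ys)
    linarith
  -- kernels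
  let kd : ℝ → ℝ → ℝ := fun y x => κ * (C.indicator (fun _ => 1) y * C.indicator (fun _ => 1) x)
  have hkdle : ∀ y x, kd y x ≤ ζ (x - hY y) := by
    intro y x
    simp only [kd]
    by_cases hy : y ∈ C
    · by_cases hx : x ∈ C
      · simpa [hy, hx] using hsmall y hy x hx
      · simpa [hx] using hζnn _
    · simpa [hy] using hζnn _
  have hindm : Measurable (C.indicator (fun _ => (1:ℝ))) := measurable_const.indicator hCm
  have hpm : Measurable (Function.uncurry fun y x => ENNReal.ofReal (ζ (x - hY y))) := by
    refine (hζmeas.comp ?_).ennreal_ofReal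
    exact measurable_snd.sub (hhm.comp measurable_fst)
  have hqm : Measurable (Function.uncurry fun y x => ENNReal.ofReal (ζ (x - hY y) - kd y x)) := by
    refine Measurable.ennreal_ofReal (Measurable.sub (hζmeas.comp ?_) ?_)
    · exact measurable_snd.sub (hhm.comp measurable_fst)
    · exact ((hindm.comp measurable_fst).mul (hindm.comp measurable_snd)).const_mul κ
  let P : Kernel ℝ ℝ := Kernel.withDensity (Kernel.const ℝ (volume : Measure ℝ))
    (fun y x => ENNReal.ofReal (ζ (x - hY y)))
  let Q : Kernel ℝ ℝ := Kernel.withDensity (Kernel.const ℝ (volume : Measure ℝ))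
    (fun y x => ENNReal.ofReal (ζ (x - hY y) - kd y x))
  let φ : Measure ℝ := ENNReal.ofReal κ • volume.restrict C
  have hPl : ∀ f : ℝ → ℝ≥0∞, Measurable f → ∀ y,
      kop P f y = ∫⁻ x, ENNReal.ofReal (ζ (x - hY y)) * f x := by
    intro f hf y
    simp only [kop, P]
    rw [Kernel.lintegral_withDensity _ hpm _ hf]
    simp
  have hQl : ∀ f : ℝ → ℝ≥0∞, Measurable f → ∀ y,
      kop Q f y = ∫⁻ x, ENNReal.ofReal (ζ (x - hY y) - kd y x) * f x := by
    intro f hf y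
    simp only [kop, Q]
    rw [Kernel.lintegral_withDensity _ hqm _ hf]
    simp
  have hPμ : ∀ f : ℝ → ℝ≥0∞, Measurable f → ∀ y, kop P f y = ∫⁻ z, f (z + hY y) ∂μ := by
    intro f hf y
    rw [hPl f hf y, hμ, lintegral_withDensity_eq_lintegral_mul _ hζmeas.ennreal_ofReal
      (show Measurable fun z => f (z + hY y) from hf.comp (measurable_id.add_const _)), ← lintegral_add_right_eq_self _ (hY y)]
    simp
  have hPQ : ∀ f : ℝ → ℝ≥0∞, Measurable f → ∀ y,
      kop P f y = kop Q f y + C.indicator (fun _ => 1) y * ∫⁻ x, f x ∂φ := by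
    intro f hf y
    have e : C.indicator (fun _ => 1) y * ∫⁻ x, f x ∂φ = ∫⁻ x, ENNReal.ofReal (kd y x) * f x := by
      simp only [φ]
      rw [lintegral_smul_measure, ← lintegral_indicator hCm, smul_eq_mul, ← lintegral_const_mul _ (hf.indicator hCm),
        ← lintegral_const_mul _ ((hf.indicator hCm).const_mul _)]
      refine lintegral_congr fun x => ?_
      simp only [kd]
      by_cases hy : y ∈ C <;> by_cases hx : x ∈ C <;> simp [hx, hy]
    rw [hPl f hf, hQl f hf, e, ← lintegral_add_left]
    · refine lintegral_congr fun x => ?_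
      rw [← add_mul, ← ENNReal.ofReal_add (by linarith [hkdle y x])]
      · simp
      · simp only [kd]
        by_cases hy : y ∈ C <;> by_cases hx : x ∈ C <;> simp [hx, hy, hκ0.le]
    · exact (hqm.comp measurable_prodMk_left).mul hf
  have hP1 : ∀ y, P y univ = 1 := by
    intro y
    have := hPμ (fun _ => 1) measurable_const y
    simpa [kop] using this
  have hφfin : IsFiniteMeasure φ := by
    constructor
    simp only [φ, Measure.smul_apply, Measure.restrict_apply_univ, smul_eq_mul]
    rw [hC, Real.volume_Icc]
    exact ENNReal.mul_lt_top ENNReal.ofReal_lt_top ENNReal.ofReal_lt_top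
  have hφ0 : φ ≠ 0 := by
    intro h
    have h2 : φ univ = 0 := by rw [h]; simp
    simp only [φ, Measure.smul_apply, Measure.restrict_apply_univ, smul_eq_mul] at h2
    rw [hC, Real.volume_Icc, mul_eq_zero, ENNReal.ofReal_eq_zero, ENNReal.ofReal_eq_zero] at h2
    rcases h2 with h2 | h2 <;> linarith
  have hacc : ∀ x : ℝ, ∃ n : ℕ, ∃ p : ℝ≥0∞, 0 < p ∧ ∀ y ≤ x,
      p ≤ (kop P)^[n] (C.indicator (fun _ => 1)) y := by
    intro x
    rw [hC]
    exact access μ P hPμ z0 ys r hz0 hys hr0 hpos x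
  obtain ⟨K, c, hc, hK0, hdrift⟩ := drift μ hi h0 hi4 (z0 - (-z0/2)) (z0 + (-z0/2)) (by linarith)
    (hpos _ (by linarith))
  have hU := recur P Q C hCm φ hφ0 hPQ hP1 Vf (fun y => c / (1 + y) ^ 2) K Vf_meas Vf_nn Vf_top
    (by
      intro R
      refine ⟨c / (1 + |R|) ^ 2, by positivity, fun y hy hyR => ?_⟩
      have h1 : 0 < 1 + y := by linarith
      have h2 := le_abs_self R
      gcongr
      linarith)
    (by
      intro y hy
      rw [hPμ _ Vf_meas.ennreal_ofReal]
      exact hdrift y hy)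
    (hacc K)
  obtain ⟨ν, hν0, hνsf, hνinv, hνC, hνu⟩ := nummelin P Q C hCm φ hφ0 hPQ hP1 hU (fun y => by
    obtain ⟨n, p, hp, h⟩ := hacc y
    exact ⟨n, hp.trans_le (h y le_rfl)⟩)
  have hconv : ∀ f : ℝ → ℝ≥0∞, Measurable f → ∀ y,
      kop P f y = ∫⁻ z, f (z + hY y) * ENNReal.ofReal (ζ z) := by
    intro f hf y
    rw [hPl f hf y, ← lintegral_add_right_eq_self _ (hY y)]
    simp [mul_comm]
  have hIC : Measurable (C.indicator (fun _ => (1:ℝ≥0∞))) := measurable_const.indicator hCm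
  refine ⟨ν, hν0, hνsf, ?_, ?_, ?_, ?_⟩
  · intro g hg
    rw [hνinv g hg]
    exact lintegral_congr fun y => hconv g hg y
  · intro x
    obtain ⟨n, p, hp, h⟩ := hacc x
    have h1 : p * ν (Iic x) ≤ 1 := by
      calc p * ν (Iic x) = ∫⁻ y in Iic x, p ∂ν := (setLIntegral_const _ _).symm
        _ ≤ ∫⁻ y in Iic x, (kop P)^[n] (C.indicator (fun _ => 1)) y ∂ν :=
            setLIntegral_mono' measurableSet_Iic fun y hy => h y hy
        _ ≤ ∫⁻ y, (kop P)^[n] (C.indicator (fun _ => 1)) y ∂ν := setLIntegral_le_lintegral _ _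
        _ = ν C := by rw [inv_iter P ν hνinv n hIC, lintegral_indicator_const hCm, one_mul]
        _ = 1 := hνC
    by_contra htop
    rw [not_lt, top_le_iff] at htop
    rw [htop, ENNReal.mul_top hp.ne'] at h1
    simp at h1
  · by_contra hfin
    have : IsFiniteMeasure ν := ⟨lt_top_iff_ne_top.2 hfin⟩
    refine hν0 (infmass μ hi h0 ν fun g hg => ?_)
    rw [hνinv g hg]
    exact lintegral_congr fun y => hPμ g hg y
  · intro ν' hν'0 hν'sf hν'
    refine hνu ν' hν'0 hν'sf fun f hf => ?_
    rw [hν' f hf]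
    exact lintegral_congr fun y => (hconv f hf y).symm
end
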